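/- arXiv:2405.16841 — 10 statements merged into one kernel-verified Lean document; each statement's English description precedes it below -/
import Mathlib

section
/- Let n ≥ 1 and let P be an n×n real signed permutation matrix all of whose complex eigenvalues have nonpositive real part. Then P can be written as P = R − D, where R is a real skew-symmetric matrix (Rᵀ = −R) and D is a diagonal matrix all of whose diagonal entries are 0 or 1. -/
/-- A real signed permutation matrix: all entries in `{-1, 0, 1}`, with exactly one
nonzero entry in each row and each column. -/
def IsSignedPerm {n : ℕ} (P : Matrix (Fin n) (Fin n) ℝ) : Prop :=
  (∀ i j, P i j = -1 ∨ P i j = 0 ∨ P i j = 1) ∧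
  (∀ i, ∃! j, P i j ≠ 0) ∧ (∀ j, ∃! i, P i j ≠ 0)

/-!
An orthogonal matrix `P` is normal, so the eigenvalues of its Hermitian part are the real parts of
the eigenvalues of `P`; hence `-(P + Pᵀ)` is positive semidefinite. In particular `P i i ≤ 0`, and
where `P i i = 0` the whole `i`-th row of `P + Pᵀ` vanishes. Where `P i i = -1`, the remaining
entries of the `i`-th row and column of `P` vanish because they have unit length. So `P` is
skew-symmetric off its diagonal, and its diagonal has entries in `{-1, 0}`.
-/

open scoped ComplexOrder ComplexStarModule Matrix

theorem add_star_nonpos_iff_spectrum_re_nonpos {A : Type*} [CStarAlgebra A] [PartialOrder A]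
    [StarOrderedRing A] {a : A} [IsStarNormal a] :
    a + star a ≤ 0 ↔ ∀ z ∈ spectrum ℂ a, z.re ≤ 0 := by
  have h_two_realPart : a + star a = (2 : ℝ) • (ℜ a : A) := by
    rw [realPart_apply_coe, smul_smul, mul_inv_cancel₀ two_ne_zero, one_smul]
  have h_spectrum : spectrum ℝ (-(ℜ a : A)) = (fun z : ℂ ↦ -z.re) '' spectrum ℂ a := by
    rw [← spectrum.neg_eq, spectrum_realPart' a, ← Set.image_neg_eq_neg, Set.image_image]
  rw [h_two_realPart, smul_nonpos_iff_nonpos_of_pos_left two_pos, ← neg_nonneg,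
    StarOrderedRing.nonneg_iff_spectrum_nonneg (R := ℝ) _ (ℜ a).2.neg, h_spectrum,
    Set.forall_mem_image]
  simp only [neg_nonneg]

theorem posSemidef_apply_eq_zero_of_diag_eq_zero {𝕜 ι : Type*} [RCLike 𝕜] [Finite ι]
    {A : Matrix ι ι 𝕜} (hA : A.PosSemidef) {i : ι} (hi : A i i = 0) (j : ι) : A j i = 0 := by
  classical
  have := Fintype.ofFinite ι
  have h_mulVec : A *ᵥ Pi.single i 1 = 0 :=
    (hA.dotProduct_mulVec_zero_iff _).mp (by simp [hi])
  simpa using congrFun h_mulVec j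

theorem isStarNormal_matrix_map {ι α β F : Type*} [Fintype ι] [NonUnitalNonAssocSemiring α]
    [Star α] [NonUnitalNonAssocSemiring β] [Star β] [FunLike F α β] [NonUnitalRingHomClass F α β]
    (f : F) (hf : Function.Semiconj f star star) {A : Matrix ι ι α} (hA : IsStarNormal A) :
    IsStarNormal (A.map f) := by
  rw [isStarNormal_iff, commute_iff_eq] at hA ⊢
  rw [Matrix.star_eq_conjTranspose] at hA ⊢
  rw [← Matrix.conjTranspose_map f hf, ← Matrix.map_mul, hA, Matrix.map_mul]

theorem isStarNormal_map_ofReal {ι : Type*} [Fintype ι] {A : Matrix ι ι ℝ} (hA : IsStarNormal A) :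
    IsStarNormal (A.map Complex.ofReal) :=
  isStarNormal_matrix_map Complex.ofRealHom (fun x ↦ (Complex.conj_ofReal x).symm) hA

section Normal

variable {ι : Type*} [Fintype ι] [DecidableEq ι] {A : Matrix ι ι ℂ}

open scoped MatrixOrder Matrix.Norms.L2Operator in
theorem posSemidef_neg_add_conjTranspose_iff_spectrum_re_nonpos [IsStarNormal A] :
    (-(A + Aᴴ)).PosSemidef ↔ ∀ z ∈ spectrum ℂ A, z.re ≤ 0 := by
  rw [← Matrix.nonneg_iff_posSemidef, neg_nonneg]
  exact add_star_nonpos_iff_spectrum_re_nonpos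

theorem diag_re_nonpos_of_spectrum_re_nonpos [IsStarNormal A]
    (hA : ∀ z ∈ spectrum ℂ A, z.re ≤ 0) (i : ι) : (A i i).re ≤ 0 := by
  have h_posSemidef := posSemidef_neg_add_conjTranspose_iff_spectrum_re_nonpos.mpr hA
  have h_re : (A i i).re + (A i i).re ≤ 0 := by
    simpa using (Complex.le_def.mp (h_posSemidef.diag_nonneg (i := i))).1
  linarith

theorem apply_eq_neg_star_apply_of_diag_re_eq_zero [IsStarNormal A]
    (hA : ∀ z ∈ spectrum ℂ A, z.re ≤ 0) {i : ι} (hi : (A i i).re = 0) (j : ι) :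
    A j i = -star (A i j) := by
  have h_posSemidef := posSemidef_neg_add_conjTranspose_iff_spectrum_re_nonpos.mpr hA
  have h_diag : (-(A + Aᴴ)) i i = 0 := by simp [Complex.add_conj, hi]
  have h_zero := posSemidef_apply_eq_zero_of_diag_eq_zero h_posSemidef h_diag j
  exact eq_neg_of_add_eq_zero_left (neg_eq_zero.mp h_zero)

end Normal

section Unitary

variable {ι : Type*} [Fintype ι] [DecidableEq ι]

theorem unitaryGroup_sum_norm_sq_row {𝕜 : Type*} [RCLike 𝕜] {U : Matrix ι ι 𝕜}
    (hU : U ∈ Matrix.unitaryGroup ι 𝕜) (i : ι) : ∑ j, ‖U i j‖ ^ 2 = 1 := by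
  have h_diag := congrFun₂ (Matrix.mem_unitaryGroup_iff.mp hU) i i
  simp only [Matrix.mul_apply, Matrix.star_apply, RCLike.star_def, RCLike.mul_conj,
    Matrix.one_apply_eq] at h_diag
  exact_mod_cast h_diag

theorem unitaryGroup_apply_eq_zero_of_norm_apply_eq_one {𝕜 : Type*} [RCLike 𝕜] {U : Matrix ι ι 𝕜}
    (hU : U ∈ Matrix.unitaryGroup ι 𝕜) {i j k : ι} (hj : ‖U i j‖ = 1) (hkj : k ≠ j) :
    U i k = 0 := by
  have h_row := unitaryGroup_sum_norm_sq_row hU i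
  rw [← Finset.add_sum_erase _ _ (Finset.mem_univ j), hj, one_pow, add_eq_left,
    Finset.sum_eq_zero_iff_of_nonneg fun _ _ ↦ sq_nonneg _] at h_row
  simpa using h_row k (Finset.mem_erase.mpr ⟨hkj, Finset.mem_univ k⟩)

end Unitary

theorem orthogonalGroup_apply_eq_neg_apply {ι : Type*} [Fintype ι] [DecidableEq ι]
    {P : Matrix ι ι ℝ} (hP : P ∈ Matrix.orthogonalGroup ι ℝ)
    (hspec : ∀ z ∈ spectrum ℂ (P.map Complex.ofReal), z.re ≤ 0) {i j : ι}
    (hi : P i i = -1 ∨ P i i = 0) (hij : i ≠ j) : P j i = -P i j := by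
  have := isStarNormal_map_ofReal (isStarNormal_of_mem_unitary hP)
  rcases hi with h_neg_one | h_zero
  · have h_norm : ‖P i i‖ = 1 := by simp [h_neg_one]
    have h_row : P i j = 0 := unitaryGroup_apply_eq_zero_of_norm_apply_eq_one hP h_norm hij.symm
    have h_col : Pᵀ i j = 0 :=
      unitaryGroup_apply_eq_zero_of_norm_apply_eq_one (Unitary.star_mem hP) h_norm hij.symm
    rw [h_row, neg_zero, ← h_col, Matrix.transpose_apply]
  · simpa [← Complex.ofReal_neg] using
      apply_eq_neg_star_apply_of_diag_re_eq_zero hspec (i := i) (by simpa using h_zero) j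

theorem transpose_add_diagonal_neg_diag {ι R : Type*} [DecidableEq ι] [AddCommGroup R]
    {P : Matrix ι ι R} (hP : ∀ i j, i ≠ j → P j i = -P i j) :
    (P + Matrix.diagonal fun i ↦ -P i i)ᵀ = -(P + Matrix.diagonal fun i ↦ -P i i) := by
  ext i j
  obtain rfl | hij := eq_or_ne i j
  · simp
  · simp [hij, hij.symm, hP i j hij]

theorem IsSignedPerm.mem_orthogonalGroup {n : ℕ} {P : Matrix (Fin n) (Fin n) ℝ}
    (hP : IsSignedPerm P) : P ∈ Matrix.orthogonalGroup (Fin n) ℝ := by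
  obtain ⟨h_entries, h_rows, h_cols⟩ := hP
  rw [Matrix.mem_orthogonalGroup_iff]
  ext i k
  obtain ⟨j, hj, hj_unique⟩ := h_rows i
  have h_single : (P * Pᵀ) i k = P i j * P k j := by
    rw [Matrix.mul_apply]
    exact Fintype.sum_eq_single j fun l hl ↦
      mul_eq_zero_of_left (not_ne_iff.mp (mt (hj_unique l) hl)) _
  obtain rfl | hik := eq_or_ne i k
  · have h_sq : P i j * P i j = 1 := mul_self_eq_one_iff.mpr <| by
      rcases h_entries i j with h | h | h
      · exact .inr h
      · exact absurd h hj
      · exact .inl h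
    rw [h_single, h_sq, Matrix.one_apply_eq]
  · have hkj : P k j = 0 := not_ne_iff.mp fun h ↦ hik ((h_cols j).unique hj h)
    rw [h_single, hkj, mul_zero, Matrix.one_apply_ne hik]

theorem stmt0_general {ι : Type*} [Fintype ι] [DecidableEq ι] {P : Matrix ι ι ℝ}
    (hP : P ∈ Matrix.orthogonalGroup ι ℝ) (hdiag : ∀ i, P i i = -1 ∨ P i i = 0 ∨ P i i = 1)
    (hspec : ∀ z ∈ spectrum ℂ (P.map Complex.ofReal), z.re ≤ 0) :
    ∃ (R D : Matrix ι ι ℝ) (d : ι → ℝ),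
      R.transpose = -R ∧ D = Matrix.diagonal d ∧ (∀ i, d i = 0 ∨ d i = 1) ∧ P = R - D := by
  have := isStarNormal_map_ofReal (isStarNormal_of_mem_unitary hP)
  have h_diag (i : ι) : P i i = -1 ∨ P i i = 0 := by
    have h_nonpos : P i i ≤ 0 := diag_re_nonpos_of_spectrum_re_nonpos hspec i
    rcases hdiag i with h | h | h
    · exact .inl h
    · exact .inr h
    · linarith
  refine ⟨P + Matrix.diagonal fun i ↦ -P i i, _, fun i ↦ -P i i, ?_, rfl, fun i ↦ ?_,
    (add_sub_cancel_right _ _).symm⟩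
  · exact transpose_add_diagonal_neg_diag fun i _ ↦
      orthogonalGroup_apply_eq_neg_apply hP hspec (h_diag i)
  · rcases h_diag i with h | h <;> simp [h]

/-- A real signed permutation matrix all of whose complex eigenvalues
have nonpositive real part can be written as `R - D` with `R` skew-symmetric and `D`
diagonal with entries 0 or 1. -/
theorem stmt0 (n : ℕ) (hn : 1 ≤ n) (P : Matrix (Fin n) (Fin n) ℝ)
    (hP : IsSignedPerm P)
    (hspec : ∀ z ∈ spectrum ℂ (P.map Complex.ofReal), z.re ≤ 0) :
    ∃ (R D : Matrix (Fin n) (Fin n) ℝ) (d : Fin n → ℝ),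
      R.transpose = -R ∧ D = Matrix.diagonal d ∧ (∀ i, d i = 0 ∨ d i = 1) ∧
      P = R - D :=
  stmt0_general hP.mem_orthogonalGroup (fun i ↦ hP.1 i i) hspec
end

section
/- Let C be an n×n real signed permutation matrix whose underlying permutation is a single n-cycle, and let s ∈ {1, −1} be the product of the n nonzero entries of C. Then the characteristic polynomial of C (over ℂ) is Xⁿ − s; equivalently, the complex eigenvalues of C are exactly the n-th roots of s. -/
/-!
In the Leibniz expansion of `det (X - M)`, a permutation `τ` contributes only if `τ j ∈ {j, σ j}`
for every `j`. Since `τ` is a bijection, the set where it agrees with `σ` is a union of cycles of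
`σ`, so when `σ` is a single cycle only `τ = 1` and `τ = σ` survive. They contribute `Xⁿ` and
`sign σ * (-1)ⁿ * ∏ j, M (σ j) j = -∏ j, M (σ j) j`.
-/

section Perm

open Equiv

variable {α : Type*} {σ τ : Perm α}

theorem apply_apply_eq_iff_of_eq_self_or_eq (h : ∀ j, τ j = j ∨ τ j = σ j) (j : α) :
    τ (σ j) = σ (σ j) ↔ τ j = σ j := by
  constructor
  · intro hj
    obtain ⟨i, hi⟩ := τ.surjective (σ j)
    rcases h i with hfix | hmove
    · obtain rfl : i = σ j := hfix.symm.trans hi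
      have hσj : σ j = j := σ.injective (hj.symm.trans hi)
      rcases h j with h | h <;> simp [h, hσj]
    · obtain rfl : i = j := σ.injective (hmove.symm.trans hi)
      exact hi
  · intro hj
    rcases h (σ j) with hfix | hmove
    · have hσj : σ j = j := τ.injective (hfix.trans hj.symm)
      rw [hσj, hj]
    · exact hmove

theorem apply_eq_of_sameCycle_of_eq_self_or_eq (h : ∀ j, τ j = j ∨ τ j = σ j) {a b : α}
    (hab : σ.SameCycle a b) (ha : τ a = σ a) : τ b = σ b := by
  obtain ⟨k, rfl⟩ := hab
  induction k with
  | zero => simpa using ha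
  | succ k ih =>
    rw [add_comm, zpow_one_add, Perm.mul_apply]
    exact (apply_apply_eq_iff_of_eq_self_or_eq h _).2 ih
  | pred k ih =>
    have hpow : σ ((σ ^ (-(k : ℤ) - 1)) a) = (σ ^ (-(k : ℤ))) a := by
      rw [← Perm.mul_apply, ← zpow_one_add, add_sub_cancel]
    rw [← apply_apply_eq_iff_of_eq_self_or_eq h, hpow]
    exact ih

theorem eq_one_or_eq_of_isCycleOn_univ (hσ : σ.IsCycleOn Set.univ)
    (h : ∀ j, τ j = j ∨ τ j = σ j) : τ = 1 ∨ τ = σ := by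
  by_cases hmove : ∃ a, τ a = σ a
  · obtain ⟨a, ha⟩ := hmove
    exact .inr <| Equiv.ext fun b =>
      apply_eq_of_sameCycle_of_eq_self_or_eq h (hσ.2 (Set.mem_univ a) (Set.mem_univ b)) ha
  · push Not at hmove
    exact .inl <| Equiv.ext fun j => (h j).resolve_right (hmove j)

theorem sign_of_isCycleOn_univ [Fintype α] [DecidableEq α] [Nonempty α]
    (hσ : σ.IsCycleOn Set.univ) : Perm.sign σ = -(-1) ^ Fintype.card α := by
  cases subsingleton_or_nontrivial α
  · have hcard : Fintype.card α = 1 :=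
      Fintype.card_eq_one_iff_nonempty_unique.2 (nonempty_unique α)
    simp [Subsingleton.elim σ 1, hcard]
  · have hmove : ∀ j, σ j ≠ j := fun j => hσ.apply_ne Set.nontrivial_univ (Set.mem_univ j)
    have hcycle : σ.IsCycle :=
      Perm.isCycle_iff_exists_isCycleOn.2
        ⟨Set.univ, Set.nontrivial_univ, hσ, fun _ _ => Set.mem_univ _⟩
    have hsupport : σ.support = Finset.univ := by
      ext j
      simp [hmove j]
    rw [hcycle.sign, hsupport, Finset.card_univ]

end Perm

section Matrix

open Equiv Matrix Polynomial

variable {ι R : Type*} [Fintype ι] [DecidableEq ι] [Nonempty ι] [CommRing R]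
  {σ : Perm ι} {M : Matrix ι ι R}

theorem det_diagonal_add_of_isCycleOn_univ (d : ι → R) (hσ : σ.IsCycleOn Set.univ)
    (hM : ∀ i j, i ≠ σ j → M i j = 0) :
    (diagonal d + M).det = ∏ j, d j + (Perm.sign σ : ℤ) * ∏ j, M (σ j) j := by
  cases subsingleton_or_nontrivial ι
  · obtain ⟨_⟩ := nonempty_unique ι
    simp [det_unique, Subsingleton.elim σ 1]
  have hmove : ∀ j, σ j ≠ j := fun j => hσ.apply_ne Set.nontrivial_univ (Set.mem_univ j)
  have hone_ne : (1 : Perm ι) ≠ σ := by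
    rintro rfl
    exact hmove (Classical.arbitrary ι) rfl
  have hvanish : ∀ τ : Perm ι, τ ∉ ({1, σ} : Finset (Perm ι)) →
      ∏ j, (diagonal d + M) (τ j) j = 0 := by
    intro τ hτ
    obtain ⟨j, hfix, hne⟩ : ∃ j, τ j ≠ j ∧ τ j ≠ σ j := by
      contrapose! hτ
      simpa using eq_one_or_eq_of_isCycleOn_univ hσ fun j => or_iff_not_imp_left.2 (hτ j)
    exact Finset.prod_eq_zero (Finset.mem_univ j) (by simp [hfix, hM _ _ hne])
  have hdiag : ∀ j, M j j = 0 := fun j => hM j j (hmove j).symm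
  rw [det_apply', ← Finset.sum_subset (Finset.subset_univ {1, σ})
    fun τ _ hτ => by rw [hvanish τ hτ, mul_zero], Finset.sum_pair hone_ne]
  simp [hdiag, hmove]

theorem charpoly_of_isCycleOn_univ (hσ : σ.IsCycleOn Set.univ)
    (hM : ∀ i j, i ≠ σ j → M i j = 0) :
    M.charpoly = X ^ Fintype.card ι - C (∏ j, M (σ j) j) := by
  have hcharmatrix : M.charmatrix = diagonal (fun _ => X) + -M.map C :=
    sub_eq_add_neg _ _
  have hsign : ((Perm.sign σ : ℤ) : R[X]) * (-1) ^ Fintype.card ι = -1 := by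
    simp [sign_of_isCycleOn_univ hσ, ← mul_pow]
  calc M.charpoly
      = ∏ _j : ι, X + ((Perm.sign σ : ℤ) : R[X]) * ∏ j, (-M.map C) (σ j) j := by
        rw [charpoly, hcharmatrix, det_diagonal_add_of_isCycleOn_univ _ hσ]
        intro i j hij
        simp [hM i j hij]
    _ = X ^ Fintype.card ι +
          ((Perm.sign σ : ℤ) : R[X]) * (-1) ^ Fintype.card ι * C (∏ j, M (σ j) j) := by
        simp [Finset.prod_neg, mul_assoc]
    _ = X ^ Fintype.card ι - C (∏ j, M (σ j) j) := by
        rw [hsign, neg_one_mul, sub_eq_add_neg]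

theorem stmt1_general {K : Type*} [Field K] {M : Matrix ι ι K} (hσ : σ.IsCycleOn Set.univ)
    (hM : ∀ i j, i ≠ σ j → M i j = 0) :
    M.charpoly = X ^ Fintype.card ι - C (∏ j, M (σ j) j) ∧
    ∀ z : K, z ∈ spectrum K M ↔ z ^ Fintype.card ι = ∏ j, M (σ j) j := by
  have hcharpoly := charpoly_of_isCycleOn_univ hσ hM
  refine ⟨hcharpoly, fun z => ?_⟩
  rw [mem_spectrum_iff_isRoot_charpoly, hcharpoly, IsRoot.def, eval_sub, eval_X_pow, eval_C,
    sub_eq_zero]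

end Matrix

theorem IsSignedPerm.apply_eq_zero {n : ℕ} {P : Matrix (Fin n) (Fin n) ℝ} (hP : IsSignedPerm P)
    {i k j : Fin n} (hk : P k j ≠ 0) (hik : i ≠ k) : P i j = 0 := by
  by_contra hi
  exact hik ((hP.2.2 j).unique hi hk)

/-- A real signed permutation matrix whose underlying permutation is a
single n-cycle has characteristic polynomial `Xⁿ - s` over ℂ, where `s = ±1` is the
product of its nonzero entries; equivalently its complex eigenvalues are exactly the
n-th roots of `s`. -/
theorem stmt1 (n : ℕ) (hn : 1 ≤ n) (C : Matrix (Fin n) (Fin n) ℝ)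
    (hC : IsSignedPerm C) (σ : Equiv.Perm (Fin n))
    (hσ : ∀ j, C (σ j) j ≠ 0)
    (hcyc : σ.IsCycleOn (Set.univ : Set (Fin n)))
    (s : ℝ) (hs : s = ∏ j, C (σ j) j) :
    (C.map Complex.ofReal).charpoly = Polynomial.X ^ n - Polynomial.C (s : ℂ) ∧
    ∀ z : ℂ, z ∈ spectrum ℂ (C.map Complex.ofReal) ↔ z ^ n = (s : ℂ) := by
  have : Nonempty (Fin n) := ⟨⟨0, hn⟩⟩
  simpa [hs] using stmt1_general (M := C.map Complex.ofReal) hcyc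
    fun i j hij => by simp [hC.apply_eq_zero (hσ j) hij]
end

section
/- Let n ≥ 1 be an integer and s ∈ {1, −1}. If every complex number z satisfying zⁿ = s has nonpositive real part, then either n = 1 and s = −1, or n = 2 and s = −1. -/
/-!
The principal root `s ^ (1 / n)` has argument `arg s / n`, hence positive real part as soon as
`|arg s| < n * (π / 2)`. Since `|arg s| ≤ π`, this leaves only `n = 1`, and `n = 2` with
`arg s = π`.
-/

theorem re_cpow_ofReal_pos {s : ℂ} (hs : s ≠ 0) {r : ℝ} (hr : |s.arg * r| < Real.pi / 2) :
    0 < (s ^ (r : ℂ)).re := by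
  rw [Complex.cpow_ofReal_re]
  exact mul_pos (Real.rpow_pos_of_pos (norm_pos_iff.mpr hs) r)
    (Real.cos_pos_of_mem_Ioo (abs_lt.mp hr))

theorem exists_pow_eq_and_re_pos {s : ℂ} (hs : s ≠ 0) {n : ℕ}
    (harg : |s.arg| < n * (Real.pi / 2)) : ∃ z : ℂ, z ^ n = s ∧ 0 < z.re := by
  have hn : (0 : ℝ) < n :=
    pos_of_mul_pos_left ((abs_nonneg _).trans_lt harg) Real.pi_div_two_pos.le
  refine ⟨s ^ (((n : ℝ)⁻¹ : ℝ) : ℂ), ?_, re_cpow_ofReal_pos hs ?_⟩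
  · rw [Complex.ofReal_inv, Complex.ofReal_natCast]
    exact Complex.cpow_nat_inv_pow s (Nat.cast_pos.mp hn).ne'
  · rwa [abs_mul, abs_of_pos (inv_pos.mpr hn), ← div_eq_mul_inv, div_lt_iff₀' hn]

theorem stmt2_general (n : ℕ) (hn : 1 ≤ n) (s : ℂ) (hs : s ≠ 0)
    (h : ∀ z : ℂ, z ^ n = s → z.re ≤ 0) :
    (n = 1 ∧ s.re ≤ 0) ∨ (n = 2 ∧ s.re < 0 ∧ s.im = 0) := by
  have harg : n * (Real.pi / 2) ≤ |s.arg| := by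
    by_contra! hlt
    obtain ⟨z, hz, hre⟩ := exists_pow_eq_and_re_pos hs hlt
    exact hre.not_ge (h z hz)
  have hn2 : n ≤ 2 := by
    have : (n : ℝ) ≤ 2 := by nlinarith [Complex.abs_arg_le_pi s, Real.pi_pos]
    exact_mod_cast this
  obtain rfl | rfl : n = 1 ∨ n = 2 := by lia
  · exact .inl ⟨rfl, h s (pow_one s)⟩
  · have hpi : Real.pi ≤ |s.arg| := by
      rwa [Nat.cast_ofNat, mul_div_cancel₀ Real.pi two_ne_zero] at harg
    have harg_eq : s.arg = Real.pi := (Complex.arg_le_pi s).antisymm <|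
      (le_abs.mp hpi).resolve_right (by linarith [Complex.neg_pi_lt_arg s])
    exact .inr ⟨rfl, Complex.arg_eq_pi_iff.mp harg_eq⟩

/-- If every complex n-th root of `s = ±1` has nonpositive real part,
then `n = 1` and `s = -1`, or `n = 2` and `s = -1`. -/
theorem stmt2 (n : ℕ) (hn : 1 ≤ n) (s : ℝ) (hs : s = 1 ∨ s = -1)
    (h : ∀ z : ℂ, z ^ n = (s : ℂ) → z.re ≤ 0) :
    (n = 1 ∧ s = -1) ∨ (n = 2 ∧ s = -1) := by
  rcases hs with rfl | rfl
  · exact absurd (stmt2_general n hn _ (by simp) h) (by norm_num)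
  · simpa using stmt2_general n hn _ (by simp) h
end

section
/- Let m ≥ 2, let P be an (m−1)×(m−1) real signed permutation matrix, let σ₀ ∈ {1, −1}, and let A be the m×m matrix with entry σ₀ in position (1, m), entries A_{i+1,j} = P_{ij} for 1 ≤ i, j ≤ m−1, and all other entries zero. If all complex eigenvalues of A are real, then A = S + D where S is a real symmetric matrix and D is a diagonal matrix all of whose diagonal entries lie in {−1, 0, 1}. -/
/-- The m×m matrix with entry `s` in (1-indexed) position (1, m), the matrix `P` in
positions `A_{i+1,j} = P_{ij}` for `1 ≤ i, j ≤ m-1`, and all other entries zero. -/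
noncomputable def embedA (m : ℕ) (s : ℝ) (P : Matrix (Fin (m-1)) (Fin (m-1)) ℝ) :
    Matrix (Fin m) (Fin m) ℝ := fun i j =>
  if hi : (i : ℕ) = 0 then (if (j : ℕ) = m - 1 then s else 0)
  else if hj : (j : ℕ) < m - 1 then
    P ⟨(i : ℕ) - 1, by have := i.isLt; omega⟩ ⟨(j : ℕ), hj⟩
  else 0

/-!
A signed permutation matrix is orthogonal. If `P` is orthogonal, then so is `A = embedA m σ₀ P`:
its rows are `σ₀` times a standard basis vector and the rows of `P` padded by a zero. An orthogonal
matrix is normal, and a normal matrix with real spectrum is Hermitian. Hence `A` itself is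
symmetric, and `A = A + 0` is the required decomposition.
-/

section RealSpectrum

variable {n : Type*} [Fintype n] [DecidableEq n]

open scoped Matrix.Norms.L2Operator in
theorem isHermitian_of_isStarNormal_of_spectrum_im_eq_zero {A : Matrix n n ℂ}
    (hA : IsStarNormal A) (hreal : ∀ z ∈ spectrum ℂ A, z.im = 0) : A.IsHermitian :=
  isSelfAdjoint_iff_isStarNormal_and_quasispectrumRestricts.mpr
    ⟨hA, SpectrumRestricts.real_iff.mpr fun z hz => Complex.ext rfl (hreal z hz)⟩

theorem isSymm_of_isStarNormal_of_spectrum_im_eq_zero {A : Matrix n n ℝ} (hA : IsStarNormal A)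
    (hreal : ∀ z ∈ spectrum ℂ (A.map Complex.ofReal), z.im = 0) : A.IsSymm := by
  have hstar : (A.map Complex.ofReal).conjTranspose = A.transpose.map Complex.ofReal := by
    ext i j
    exact Complex.conj_ofReal (A j i)
  have hnormal : IsStarNormal (A.map Complex.ofReal) := by
    refine ⟨?_⟩
    rw [Matrix.star_eq_conjTranspose, hstar]
    exact hA.star_comm_self.map (Complex.ofRealHom.mapMatrix (m := n))
  have hHerm := isHermitian_of_isStarNormal_of_spectrum_im_eq_zero hnormal hreal
  exact Matrix.map_injective Complex.ofReal_injective (hstar.symm.trans hHerm)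

end RealSpectrum

namespace IsSignedPerm

variable {n : ℕ} {P : Matrix (Fin n) (Fin n) ℝ}

theorem mul_self_apply_eq_one (hP : IsSignedPerm P) {i j : Fin n} (hij : P i j ≠ 0) :
    P i j * P i j = 1 := by
  rcases hP.1 i j with h | h | h
  · simp [h]
  · exact absurd h hij
  · simp [h]

theorem mul_apply_eq_zero (hP : IsSignedPerm P) {i k : Fin n} (hik : i ≠ k) (j : Fin n) :
    P i j * P k j = 0 := by
  by_contra h
  exact hik ((hP.2.2 j).unique (left_ne_zero_of_mul h) (right_ne_zero_of_mul h))

theorem mem_orthogonalGroup_s3 (hP : IsSignedPerm P) : P ∈ Matrix.orthogonalGroup (Fin n) ℝ := by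
  rw [Matrix.mem_orthogonalGroup_iff]
  ext i k
  change ∑ j, P i j * P k j = _
  rcases eq_or_ne i k with rfl | hik
  · obtain ⟨j, hj, hunique⟩ := hP.2.1 i
    have hzero (l : Fin n) (hl : l ≠ j) : P i l * P i l = 0 :=
      mul_self_eq_zero.mpr (not_not.mp (mt (hunique l) hl))
    rw [Fintype.sum_eq_single j hzero, hP.mul_self_apply_eq_one hj, Matrix.one_apply_eq]
  · rw [Matrix.one_apply_ne hik]
    exact Finset.sum_eq_zero fun j _ => hP.mul_apply_eq_zero hik j

end IsSignedPerm

section EmbedA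

variable {n : ℕ} (s : ℝ) (P : Matrix (Fin n) (Fin n) ℝ)

theorem embedA_zero_last : embedA (n + 1) s P 0 (Fin.last n) = s := by
  simp [embedA]

theorem embedA_zero_castSucc (j : Fin n) : embedA (n + 1) s P 0 j.castSucc = 0 := by
  simp [embedA, j.isLt.ne]

theorem embedA_succ_last (i : Fin n) : embedA (n + 1) s P i.succ (Fin.last n) = 0 := by
  simp [embedA]

theorem embedA_succ_castSucc (i j : Fin n) : embedA (n + 1) s P i.succ j.castSucc = P i j := by
  simp [embedA]

variable {s P}

theorem embedA_succ_mem_orthogonalGroup (hs : s = 1 ∨ s = -1)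
    (hP : P ∈ Matrix.orthogonalGroup (Fin n) ℝ) :
    embedA (n + 1) s P ∈ Matrix.orthogonalGroup (Fin (n + 1)) ℝ := by
  rw [Matrix.mem_orthogonalGroup_iff] at hP ⊢
  have hrows (i k : Fin n) : ∑ j, P i j * P k j = (1 : Matrix (Fin n) (Fin n) ℝ) i k :=
    congrFun (congrFun hP i) k
  ext i k
  change ∑ j, embedA (n + 1) s P i j * embedA (n + 1) s P k j = _
  rw [Fin.sum_univ_castSucc]
  cases i using Fin.cases with
  | zero =>
    cases k using Fin.cases with
    | zero => simp [embedA_zero_last, embedA_zero_castSucc, mul_self_eq_one_iff.mpr hs]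
    | succ k => simp [embedA_zero_castSucc, embedA_succ_last, (Fin.succ_ne_zero k).symm]
  | succ i =>
    cases k using Fin.cases with
    | zero => simp [embedA_zero_castSucc, embedA_succ_last]
    | succ k => simp [embedA_succ_castSucc, embedA_succ_last, hrows, Matrix.one_apply]

end EmbedA

theorem embedA_mem_orthogonalGroup {m : ℕ} {s : ℝ} (hs : s = 1 ∨ s = -1)
    {P : Matrix (Fin (m - 1)) (Fin (m - 1)) ℝ}
    (hP : P ∈ Matrix.orthogonalGroup (Fin (m - 1)) ℝ) :
    embedA m s P ∈ Matrix.orthogonalGroup (Fin m) ℝ := by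
  cases m with
  | zero => exact (Matrix.mem_orthogonalGroup_iff _ _).mpr (Subsingleton.elim _ _)
  | succ n => exact embedA_succ_mem_orthogonalGroup hs hP

theorem stmt3_general (m : ℕ) (P : Matrix (Fin (m - 1)) (Fin (m - 1)) ℝ)
    (hP : P ∈ Matrix.orthogonalGroup (Fin (m - 1)) ℝ) (σ₀ : ℝ) (hσ : σ₀ = 1 ∨ σ₀ = -1)
    (hreal : ∀ z ∈ spectrum ℂ ((embedA m σ₀ P).map Complex.ofReal), z.im = 0) :
    (embedA m σ₀ P).IsSymm :=
  isSymm_of_isStarNormal_of_spectrum_im_eq_zero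
    (isStarNormal_of_mem_unitary (embedA_mem_orthogonalGroup hσ hP)) hreal

/-- If the m×m matrix `A` built from `σ₀` and a signed permutation
matrix `P` has only real complex eigenvalues, then `A = S + D` with `S` symmetric and
`D` diagonal with entries in `{-1, 0, 1}`. -/
theorem stmt3 (m : ℕ) (hm : 2 ≤ m) (P : Matrix (Fin (m-1)) (Fin (m-1)) ℝ)
    (hP : IsSignedPerm P) (σ₀ : ℝ) (hσ : σ₀ = 1 ∨ σ₀ = -1)
    (hreal : ∀ z ∈ spectrum ℂ ((embedA m σ₀ P).map Complex.ofReal), z.im = 0) :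
    ∃ (S D : Matrix (Fin m) (Fin m) ℝ) (d : Fin m → ℝ),
      S.transpose = S ∧ D = Matrix.diagonal d ∧
      (∀ i, d i = -1 ∨ d i = 0 ∨ d i = 1) ∧
      embedA m σ₀ P = S + D :=
  ⟨embedA m σ₀ P, 0, 0, stmt3_general m P hP.mem_orthogonalGroup_s3 σ₀ hσ hreal,
    Matrix.diagonal_zero.symm, fun _ => Or.inr (Or.inl rfl), (add_zero _).symm⟩
end

section
/- Let m ≥ 3 be odd, σ₀ ∈ {1, −1}, and P = P*. Let A be the m×m matrix with entry σ₀ in position (1, m), entries A_{i+1,j} = P_{ij} for 1 ≤ i, j ≤ m−1, and all other entries zero; let B be the m×m matrix with entries B_{i+1,j+1} = P_{ij} for 1 ≤ i, j ≤ m−1 and all other entries zero; and for τ > 0 let D_τ = diag(1, τ, τ, …, τ). Then for every k ∈ ℝ and every τ > 0, all complex eigenvalues of the matrix D_τ⁻¹(kA + iB) are real. -/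
/-- The m×m matrix with entries `B_{i+1,j+1} = P_{ij}` (1-indexed) for `1 ≤ i, j ≤ m-1`
and all other entries zero. -/
noncomputable def embedB (m : ℕ) (P : Matrix (Fin (m-1)) (Fin (m-1)) ℝ) :
    Matrix (Fin m) (Fin m) ℝ := fun i j =>
  if h : (i : ℕ) = 0 ∨ (j : ℕ) = 0 then 0
  else P ⟨(i : ℕ) - 1, by have := i.isLt; omega⟩ ⟨(j : ℕ) - 1, by have := j.isLt; omega⟩

/-- The (m-1)×(m-1) matrix `P*` with (1-indexed) entries `p_{ij} = 0` if `i + j ≠ m`,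
and for `i + j = m`: `p_{ij} = σ₀ (-1)^(j-1)` if `j ≤ m/2`, `p_{ij} = σ₀ (-1)^(m-j)`
if `j > m/2`. -/
noncomputable def Pstar (m : ℕ) (σ₀ : ℝ) : Matrix (Fin (m-1)) (Fin (m-1)) ℝ := fun i j =>
  if (i : ℕ) + (j : ℕ) + 2 = m then
    (if 2 * ((j : ℕ) + 1) ≤ m then σ₀ * (-1) ^ (j : ℕ)
     else σ₀ * (-1) ^ (m - ((j : ℕ) + 1)))
  else 0

/-- The diagonal matrix `D_τ = diag(1, τ, τ, …, τ)` (as a complex matrix). -/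
noncomputable def Dmat (m : ℕ) (τ : ℝ) : Matrix (Fin m) (Fin m) ℂ :=
  Matrix.diagonal (fun i => if (i : ℕ) = 0 then 1 else (τ : ℂ))

/-!
The alternating signs of `P*` are arranged so that its shift `A` has entries `σ₀ (-1)^min(i, j)` on
the antidiagonal (0-indexed), hence is symmetric. Off its diagonal `P*` is skew-symmetric, and for
odd `m` its antidiagonal misses the diagonal, so `B` is skew-symmetric. Therefore `H = kA + iB` is
Hermitian, and an eigenvector `D⁻¹Hv = zv` satisfies `v*Hv = z v*Dv` with `v*Hv` real and
`v*Dv > 0`, which forces `z` to be real.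
-/

open scoped Matrix ComplexOrder

section GeneralizedEigenvalue

variable {n : Type*} [Fintype n]

theorem exists_mulVec_eq_smul_mulVec_of_mem_spectrum_inv_mul {K : Type*} [Field K] [DecidableEq n]
    {D H : Matrix n n K} (hD : IsUnit D) {z : K} (hz : z ∈ spectrum K (D⁻¹ * H)) :
    ∃ v ≠ 0, H *ᵥ v = z • D *ᵥ v := by
  rw [← Matrix.spectrum_toLin', ← Module.End.hasEigenvalue_iff_mem_spectrum] at hz
  obtain ⟨v, hv⟩ := hz.exists_hasEigenvector
  have hDH : (D⁻¹ * H) *ᵥ v = z • v := by simpa only [Matrix.toLin'_apply] using hv.apply_eq_smul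
  refine ⟨v, hv.2, ?_⟩
  calc H *ᵥ v = D *ᵥ (D⁻¹ * H) *ᵥ v := by
        rw [Matrix.mulVec_mulVec,
          Matrix.mul_nonsing_inv_cancel_left _ _ ((Matrix.isUnit_iff_isUnit_det D).1 hD)]
    _ = z • D *ᵥ v := by rw [hDH, Matrix.mulVec_smul]

variable {𝕜 : Type*} [RCLike 𝕜] {D H : Matrix n n 𝕜} {z : 𝕜}

theorem im_eq_zero_of_mulVec_eq_smul_mulVec (hD : D.PosDef) (hH : H.IsHermitian) {v : n → 𝕜}
    (hv : v ≠ 0) (h : H *ᵥ v = z • D *ᵥ v) : RCLike.im z = 0 := by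
  obtain ⟨hre, him⟩ := RCLike.pos_iff.1 (hD.dotProduct_mulVec_pos hv)
  have hquad : RCLike.im (z * (star v ⬝ᵥ D *ᵥ v)) = 0 := by
    rw [← smul_eq_mul, ← dotProduct_smul, ← h, hH.im_star_dotProduct_mulVec_self]
  rw [RCLike.mul_im, him, mul_zero, zero_add] at hquad
  exact (mul_eq_zero.1 hquad).resolve_right hre.ne'

theorem im_eq_zero_of_mem_spectrum_inv_mul [DecidableEq n] (hD : D.PosDef) (hH : H.IsHermitian)
    (hz : z ∈ spectrum 𝕜 (D⁻¹ * H)) : RCLike.im z = 0 := by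
  obtain ⟨v, hv, hHv⟩ := exists_mulVec_eq_smul_mulVec_of_mem_spectrum_inv_mul hD.isUnit hz
  exact im_eq_zero_of_mulVec_eq_smul_mulVec hD hH hv hHv

end GeneralizedEigenvalue

theorem isHermitian_map_ofReal {n : Type*} {A : Matrix n n ℝ} (hA : A.IsSymm) :
    (A.map Complex.ofReal).IsHermitian :=
  (Matrix.isHermitian_iff_isSymm.2 hA).map _ fun x => (Complex.conj_ofReal x).symm

theorem isHermitian_I_smul_map_ofReal {n : Type*} {B : Matrix n n ℝ} (hB : Bᵀ = -B) :
    (Complex.I • B.map Complex.ofReal).IsHermitian := by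
  refine Matrix.IsHermitian.ext fun i j => ?_
  have hij : B j i = -B i j := congrFun₂ hB i j
  simp [hij]

section Pstar

variable {m : ℕ} {σ : ℝ} {i j : Fin (m - 1)}

theorem Pstar_apply_of_add_ne (h : (i : ℕ) + j + 2 ≠ m) : Pstar m σ i j = 0 :=
  if_neg h

theorem Pstar_apply_of_le (h : (i : ℕ) + j + 2 = m) (hji : j ≤ i) :
    Pstar m σ i j = σ * (-1) ^ (j : ℕ) := by
  rw [Pstar, if_pos h, if_pos (by omega)]

theorem Pstar_apply_of_lt (h : (i : ℕ) + j + 2 = m) (hij : i < j) :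
    Pstar m σ i j = σ * (-1) ^ ((i : ℕ) + 1) := by
  rw [Pstar, if_pos h, if_neg (by omega), show m - ((j : ℕ) + 1) = i + 1 by omega]

theorem Pstar_apply_swap_of_lt (hij : i < j) : Pstar m σ j i = -Pstar m σ i j := by
  by_cases h : (i : ℕ) + j + 2 = m
  · rw [Pstar_apply_of_lt h hij, Pstar_apply_of_le (by omega) hij.le, pow_succ]
    ring
  · rw [Pstar_apply_of_add_ne h, Pstar_apply_of_add_ne (by omega), neg_zero]

theorem transpose_Pstar (hm : Odd m) (σ : ℝ) : (Pstar m σ)ᵀ = -Pstar m σ := by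
  ext i j
  rw [Matrix.transpose_apply, Matrix.neg_apply]
  rcases lt_trichotomy i j with hij | rfl | hji
  · exact Pstar_apply_swap_of_lt hij
  · have hdiag : (i : ℕ) + i + 2 ≠ m := by grind
    rw [Pstar_apply_of_add_ne hdiag, neg_zero]
  · rw [Pstar_apply_swap_of_lt hji, neg_neg]

end Pstar

section Embedding

variable {m : ℕ}

theorem embedA_Pstar_apply (σ : ℝ) (i j : Fin m) :
    embedA m σ (Pstar m σ) i j =
      if (i : ℕ) + j + 1 = m then σ * (-1) ^ min (i : ℕ) j else 0 := by
  by_cases hi : (i : ℕ) = 0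
  · simp only [embedA, hi, dite_true, Nat.zero_min, pow_zero, mul_one]
    congr 1
    grind
  by_cases hj : (j : ℕ) < m - 1
  · simp only [embedA, hi, hj, dite_true, dite_false]
    split_ifs with hsum
    · have hsum' : (i : ℕ) - 1 + j + 2 = m := by omega
      rcases lt_or_ge ((i : ℕ) - 1) j with hij | hji
      · rw [Pstar_apply_of_lt hsum' hij, Nat.sub_one_add_one hi, min_eq_left (by omega)]
      · rw [Pstar_apply_of_le hsum' hji, min_eq_right (by omega)]
    · exact Pstar_apply_of_add_ne (by grind)
  · simp only [embedA, hi, hj, dite_false]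
    rw [if_neg (by omega)]

theorem isSymm_embedA_Pstar (σ : ℝ) : (embedA m σ (Pstar m σ)).IsSymm :=
  Matrix.IsSymm.ext fun i j => by
    rw [embedA_Pstar_apply, embedA_Pstar_apply, add_comm (j : ℕ), min_comm]

theorem transpose_embedB (P : Matrix (Fin (m - 1)) (Fin (m - 1)) ℝ) :
    (embedB m P)ᵀ = embedB m Pᵀ := by
  ext i j
  simp only [Matrix.transpose_apply, embedB, or_comm]

theorem embedB_neg (P : Matrix (Fin (m - 1)) (Fin (m - 1)) ℝ) :
    embedB m (-P) = -embedB m P := by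
  ext i j
  simp only [embedB, Matrix.neg_apply]
  split_ifs <;> simp

theorem transpose_embedB_Pstar (hm : Odd m) (σ : ℝ) :
    (embedB m (Pstar m σ))ᵀ = -embedB m (Pstar m σ) := by
  rw [transpose_embedB, transpose_Pstar hm, embedB_neg]

end Embedding

theorem posDef_Dmat (m : ℕ) {τ : ℝ} (hτ : 0 < τ) : (Dmat m τ).PosDef := by
  refine Matrix.PosDef.diagonal fun i => ?_
  split_ifs
  · exact one_pos
  · exact Complex.zero_lt_real.2 hτ

theorem stmt6_general {m : ℕ} (hodd : Odd m) (σ k : ℝ) {D : Matrix (Fin m) (Fin m) ℂ}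
    (hD : D.PosDef) :
    ∀ z ∈ spectrum ℂ (D⁻¹ *
        ((k : ℂ) • (embedA m σ (Pstar m σ)).map Complex.ofReal +
          Complex.I • (embedB m (Pstar m σ)).map Complex.ofReal)),
      z.im = 0 := by
  have hA : ((k : ℂ) • (embedA m σ (Pstar m σ)).map Complex.ofReal).IsHermitian :=
    (isHermitian_map_ofReal (isSymm_embedA_Pstar σ)).smul (Complex.conj_ofReal k)
  have hB : (Complex.I • (embedB m (Pstar m σ)).map Complex.ofReal).IsHermitian :=
    isHermitian_I_smul_map_ofReal (transpose_embedB_Pstar hodd σ)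
  exact fun _ hz => im_eq_zero_of_mem_spectrum_inv_mul hD (hA.add hB) hz

/-- For odd `m ≥ 3`, `σ₀ = ±1`, and `P = P*`, all complex eigenvalues
of `D_τ⁻¹ (k A + i B)` are real, for every `k ∈ ℝ` and `τ > 0`. -/
theorem stmt6 (m : ℕ) (hm : 3 ≤ m) (hodd : Odd m) (σ₀ : ℝ) (hσ : σ₀ = 1 ∨ σ₀ = -1)
    (k τ : ℝ) (hτ : 0 < τ) :
    ∀ z ∈ spectrum ℂ ((Dmat m τ)⁻¹ *
        ((k : ℂ) • (embedA m σ₀ (Pstar m σ₀)).map Complex.ofReal +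
          Complex.I • (embedB m (Pstar m σ₀)).map Complex.ofReal)),
      z.im = 0 :=
  stmt6_general hodd σ₀ k (posDef_Dmat m hτ)
end

section
/- Let m ≥ 2, σ₀ ∈ {1, −1}, and let α₁, …, α_{m−1} be real numbers. Let Â be the m×m real matrix whose first row is (α₁, α₂, …, α_{m−1}, σ₀), whose entries satisfy Â_{i+1,j} = P*_{ij} for 1 ≤ i, j ≤ m−1, and all of whose other entries are zero. Then there exist nonnegative integers a, b with a + b = m − 2 such that the characteristic polynomial of Â equals (X − 1)^a (X + 1)^b (X² − α₁X − 1). In particular, all complex eigenvalues of Â are real. -/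
/-- The m×m matrix `Â` with first row `(α₁, …, α_{m-1}, σ₀)`, entries
`Â_{i+1,j} = P*_{ij}` for `1 ≤ i, j ≤ m-1` (1-indexed), and all other entries zero. -/
noncomputable def Ahat (m : ℕ) (σ₀ : ℝ) (α : Fin (m-1) → ℝ) :
    Matrix (Fin m) (Fin m) ℝ := fun i j =>
  if hi : (i : ℕ) = 0 then
    (if hj : (j : ℕ) < m - 1 then α ⟨(j : ℕ), hj⟩ else σ₀)
  else if hj : (j : ℕ) < m - 1 then
    Pstar m σ₀ ⟨(i : ℕ) - 1, by have := i.isLt; omega⟩ ⟨(j : ℕ), hj⟩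
  else 0

/-!
The first and last columns of `Â` vanish off the first and last rows, so the characteristic
polynomial is the product of those of the corner block `!![α₁, σ₀; σ₀, 0]` and of the interior
block. The corners give `X ^ 2 - α₁ X - 1`, which splits because it belongs to a symmetric matrix.
The interior block `B` is antidiagonal and `B * B = 1`, so `(X - B)(X + B) = X ^ 2 - 1`; taking
determinants, `B.charpoly` divides a power of `(X - 1)(X + 1)`.
-/

open Polynomial Matrix

theorem mul_self_eq_one_of_apply_eq_ite {R n : Type*} [NonAssocSemiring R] [Fintype n]
    [DecidableEq n] {M : Matrix n n R} {e : n → n} {d : n → R}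
    (he : e.Involutive) (hM : ∀ i j, M i j = if j = e i then d i else 0)
    (hd : ∀ i, d i * d (e i) = 1) : M * M = 1 := by
  ext i j
  rw [mul_apply]
  calc ∑ k, M i k * M k j = d i * M (e i) j := by
        simp only [hM i, ite_mul, zero_mul, Finset.sum_ite_eq', Finset.mem_univ, if_true]
    _ = (1 : Matrix n n R) i j := by simp [hM, he i, hd, one_apply, eq_comm]

section CommRing

variable {R n : Type*} [CommRing R] [Fintype n] [DecidableEq n]

theorem charpoly_eq_mul_of_bijective_sumElim {ι κ : Type*} [Fintype ι] [DecidableEq ι]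
    [Fintype κ] [DecidableEq κ] {f : ι → n} {g : κ → n} (hfg : (Sum.elim f g).Bijective)
    {M : Matrix n n R} (h : ∀ k i, M (g k) (f i) = 0) :
    M.charpoly = (M.submatrix f f).charpoly * (M.submatrix g g).charpoly := by
  have hblocks : reindex (Equiv.ofBijective _ hfg).symm (Equiv.ofBijective _ hfg).symm M =
      fromBlocks (M.submatrix f f) (M.submatrix f g) 0 (M.submatrix g g) := by
    ext (i | i) (j | j)
    · rfl
    · rfl
    · exact h i j
    · rfl
  rw [← charpoly_reindex (Equiv.ofBijective _ hfg).symm, hblocks, charpoly_fromBlocks_zero₂₁]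

theorem charpoly_mul_charpoly_neg_of_mul_self_eq_one {M : Matrix n n R} (hM : M * M = 1) :
    M.charpoly * (-M).charpoly = (X ^ 2 - 1) ^ Fintype.card n := by
  have hfactor : M.charmatrix * (-M).charmatrix = scalar n (X ^ 2 - 1 : R[X]) := by
    have hMC : (C : R →+* R[X]).mapMatrix M * (C : R →+* R[X]).mapMatrix M = 1 := by
      rw [← map_mul, hM, map_one]
    have hcomm := scalar_commute (X : R[X]) (Commute.all _) ((C : R →+* R[X]).mapMatrix M)
    rw [charmatrix, charmatrix, map_neg, sub_neg_eq_add, ← hcomm.mul_self_sub_mul_self_eq', hMC,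
      ← map_mul, ← map_one (scalar n), ← map_sub, sq]
  rw [charpoly, charpoly, ← det_mul, hfactor, scalar_apply, det_diagonal, Finset.prod_const,
    Finset.card_univ]

end CommRing

section IsDomain

variable {R : Type*} [CommRing R] [IsDomain R]

theorem exists_eq_pow_mul_pow_of_monic_of_dvd {p : R[X]} (hp : p.Monic) {r s : R} {k l : ℕ}
    (h : p ∣ (X - C r) ^ k * (X - C s) ^ l) :
    ∃ a b : ℕ, p = (X - C r) ^ a * (X - C s) ^ b := by
  obtain ⟨q, hq⟩ := h
  obtain ⟨b, -, u, v, -, huv, rfl, -⟩ := mul_eq_mul_prime_pow (prime_X_sub_C s) hq.symm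
  obtain ⟨a, -, hu⟩ := (dvd_prime_pow (prime_X_sub_C r) k).mp ⟨v, huv⟩
  have hu_monic : u.Monic := ((monic_X_sub_C s).pow b).of_mul_monic_right hp
  exact ⟨a, b, by rw [eq_of_monic_of_associated hu_monic ((monic_X_sub_C r).pow a) hu]⟩

theorem exists_charpoly_eq_of_mul_self_eq_one {n : Type*} [Fintype n] [DecidableEq n]
    {M : Matrix n n R} (hM : M * M = 1) :
    ∃ a b : ℕ, a + b = Fintype.card n ∧ M.charpoly = (X - 1) ^ a * (X + 1) ^ b := by
  have hdvd : M.charpoly ∣ (X - C 1) ^ Fintype.card n * (X - C (-1)) ^ Fintype.card n := by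
    refine ⟨(-M).charpoly, ?_⟩
    rw [charpoly_mul_charpoly_neg_of_mul_self_eq_one hM, ← mul_pow, C_neg, C_1]
    ring
  obtain ⟨a, b, hab⟩ := exists_eq_pow_mul_pow_of_monic_of_dvd M.charpoly_monic hdvd
  refine ⟨a, b, ?_, by simpa using hab⟩
  rw [← M.charpoly_natDegree_eq_dim, hab,
    ((monic_X_sub_C _).pow a).natDegree_mul ((monic_X_sub_C _).pow b)]
  simp only [natDegree_pow, natDegree_X_sub_C, mul_one]

end IsDomain

theorem spectrum_map_subset_range_of_splits {K L n : Type*} [Field K] [Field L] [Fintype n]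
    [DecidableEq n] {M : Matrix n n K} (hM : M.charpoly.Splits) (f : K →+* L) :
    spectrum L (M.map f) ⊆ Set.range f := by
  intro z hz
  rw [mem_spectrum_iff_isRoot_charpoly, charpoly_map] at hz
  exact hM.mem_range_of_isRoot M.charpoly_monic.ne_zero hz

theorem splits_X_sq_sub_C_mul_X_sub_one (t : ℝ) : (X ^ 2 - C t * X - 1 : ℝ[X]).Splits := by
  have hsymm : !![t, 1; 1, 0].IsHermitian := by
    ext i j
    fin_cases i <;> fin_cases j <;> simp
  simpa [charpoly_fin_two, sub_eq_add_neg] using hsymm.splits_charpoly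

/-- The first and last of `n + 2` indices, which carry the corner block of `Â`. -/
def cornerIndex (n : ℕ) : Fin 2 → Fin (n + 2) := ![0, Fin.last (n + 1)]

/-- The inclusion of the `n` indices strictly between the first and the last of `n + 2`. -/
def interiorIndex (n : ℕ) (i : Fin n) : Fin (n + 2) := i.castSucc.succ

theorem rev_interiorIndex {n : ℕ} (i : Fin n) :
    (interiorIndex n i).rev = interiorIndex n i.rev := by
  simp only [interiorIndex, Fin.rev_succ, Fin.rev_castSucc, Fin.castSucc_succ]

theorem interiorIndex_injective (n : ℕ) : (interiorIndex n).Injective :=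
  (Fin.succ_injective _).comp (Fin.castSucc_injective n)

theorem bijective_sumElim_cornerIndex_interiorIndex (n : ℕ) :
    (Sum.elim (cornerIndex n) (interiorIndex n)).Bijective := by
  have hcorner : (cornerIndex n).Injective := by
    intro i j
    fin_cases i <;> fin_cases j <;> simp [cornerIndex, Fin.ext_iff]
  have hdisjoint : ∀ i j, cornerIndex n i ≠ interiorIndex n j := by
    intro i j
    fin_cases i <;> simp [cornerIndex, interiorIndex, Fin.ext_iff, j.isLt.ne']
  refine (Fintype.bijective_iff_injective_and_card _).mpr
    ⟨hcorner.sumElim (interiorIndex_injective n) hdisjoint, ?_⟩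
  rw [Fintype.card_sum, Fintype.card_fin, Fintype.card_fin, Fintype.card_fin, add_comm]

section Ahat

theorem Ahat_apply_of_ne_zero {m : ℕ} (σ₀ : ℝ) (α : Fin (m - 1) → ℝ) {i : Fin m}
    (hi : (i : ℕ) ≠ 0) (j : Fin m) :
    Ahat m σ₀ α i j = if j = i.rev then σ₀ * (-1) ^ min (i : ℕ) i.rev else 0 := by
  by_cases hj : j = i.rev
  · have hsum : (i : ℕ) + j + 1 = m := by rw [hj, Fin.val_rev]; omega
    have hexp : min (i : ℕ) j = if 2 * ((j : ℕ) + 1) ≤ m then (j : ℕ) else m - (j + 1) := by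
      split_ifs <;> omega
    rw [if_pos hj, ← hj, hexp, Ahat, dif_neg hi, dif_pos (by omega), Pstar,
      if_pos (by simp only; omega)]
    split_ifs <;> rfl
  · have hsum : (i : ℕ) + j + 1 ≠ m := by
      contrapose hj
      rw [Fin.ext_iff, Fin.val_rev]
      omega
    rw [if_neg hj, Ahat, dif_neg hi]
    split_ifs
    · exact if_neg (by simp only; omega)
    · rfl

variable {n : ℕ} {σ₀ : ℝ} (α : Fin (n + 2 - 1) → ℝ)

theorem Ahat_interiorIndex_cornerIndex (i : Fin n) (j : Fin 2) :
    Ahat (n + 2) σ₀ α (interiorIndex n i) (cornerIndex n j) = 0 := by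
  rw [Ahat_apply_of_ne_zero _ _ (Nat.succ_ne_zero _), rev_interiorIndex, if_neg]
  exact (Sum.elim_injective.mp (bijective_sumElim_cornerIndex_interiorIndex n).1).2.2 _ _

theorem Ahat_interior_mul_self_eq_one (hσ : σ₀ * σ₀ = 1) :
    (Ahat (n + 2) σ₀ α).submatrix (interiorIndex n) (interiorIndex n) *
      (Ahat (n + 2) σ₀ α).submatrix (interiorIndex n) (interiorIndex n) = 1 := by
  refine mul_self_eq_one_of_apply_eq_ite (e := Fin.rev)
    (d := fun i ↦ σ₀ * (-1) ^ min (interiorIndex n i : ℕ) (interiorIndex n i.rev))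
    Fin.rev_involutive (fun i j ↦ ?_) fun i ↦ ?_
  · simp only [submatrix_apply, Ahat_apply_of_ne_zero σ₀ α (i := interiorIndex n i)
      (Nat.succ_ne_zero _), rev_interiorIndex, (interiorIndex_injective n).eq_iff]
  · rw [Fin.rev_rev, min_comm (interiorIndex n i.rev : ℕ), mul_mul_mul_comm, hσ, ← mul_pow]
    norm_num

theorem Ahat_corner_eq :
    (Ahat (n + 2) σ₀ α).submatrix (cornerIndex n) (cornerIndex n) =
      !![α ⟨0, by omega⟩, σ₀; σ₀, 0] := by
  have hlast (j : Fin (n + 2)) :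
      Ahat (n + 2) σ₀ α (Fin.last (n + 1)) j = if j = 0 then σ₀ else 0 := by
    rw [Ahat_apply_of_ne_zero _ _ (by simp)]
    simp
  ext i j
  fin_cases i <;> fin_cases j
  · simp [cornerIndex, Ahat]
  · simp [cornerIndex, Ahat]
  · simp [cornerIndex, hlast]
  · simp [cornerIndex, hlast]

theorem Ahat_corner_charpoly (hσ : σ₀ * σ₀ = 1) :
    ((Ahat (n + 2) σ₀ α).submatrix (cornerIndex n) (cornerIndex n)).charpoly =
      X ^ 2 - C (α ⟨0, by omega⟩) * X - 1 := by
  simp [Ahat_corner_eq, charpoly_fin_two, hσ, sub_eq_add_neg]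

theorem exists_Ahat_charpoly_eq (hσ : σ₀ * σ₀ = 1) :
    ∃ a b : ℕ, a + b = n ∧ (Ahat (n + 2) σ₀ α).charpoly =
      (X - 1) ^ a * (X + 1) ^ b * (X ^ 2 - C (α ⟨0, by omega⟩) * X - 1) := by
  obtain ⟨a, b, hab, hinterior⟩ :=
    exists_charpoly_eq_of_mul_self_eq_one (Ahat_interior_mul_self_eq_one α hσ)
  refine ⟨a, b, hab.trans (Fintype.card_fin n), ?_⟩
  rw [charpoly_eq_mul_of_bijective_sumElim (bijective_sumElim_cornerIndex_interiorIndex n)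
    (Ahat_interiorIndex_cornerIndex α), Ahat_corner_charpoly α hσ, hinterior, mul_comm]

end Ahat

/-- The characteristic polynomial of `Â` is
`(X - 1)^a (X + 1)^b (X² - α₁ X - 1)` for some nonnegative integers `a + b = m - 2`;
in particular all complex eigenvalues of `Â` are real. -/
theorem stmt8 (m : ℕ) (hm : 2 ≤ m) (σ₀ : ℝ) (hσ : σ₀ = 1 ∨ σ₀ = -1)
    (α : Fin (m-1) → ℝ) :
    (∃ a b : ℕ, a + b = m - 2 ∧
      (Ahat m σ₀ α).charpoly =
        (Polynomial.X - 1) ^ a * (Polynomial.X + 1) ^ b *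
          (Polynomial.X ^ 2 - Polynomial.C (α ⟨0, by omega⟩) * Polynomial.X - 1)) ∧
    ∀ z ∈ spectrum ℂ ((Ahat m σ₀ α).map Complex.ofReal), z.im = 0 := by
  obtain ⟨n, rfl⟩ := Nat.exists_eq_add_of_le' hm
  obtain ⟨a, b, hab, hchar⟩ := exists_Ahat_charpoly_eq α (mul_self_eq_one_iff.mpr hσ)
  refine ⟨⟨a, b, hab, hchar⟩, fun z hz ↦ ?_⟩
  have hsplits : (Ahat (n + 2) σ₀ α).charpoly.Splits := by
    rw [hchar]
    exact (((Splits.X_sub_C 1).pow a).mul ((Splits.X_add_C 1).pow b)).mul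
      (splits_X_sq_sub_C_mul_X_sub_one _)
  obtain ⟨x, rfl⟩ := spectrum_map_subset_range_of_splits hsplits Complex.ofRealHom hz
  exact Complex.ofReal_im x
end

section
/- Let m ≥ 2, σ₀ ∈ {1, −1}, and k ∈ ℝ. Then the vector r₀ ∈ ℂ^m with components (r₀)_j = (ik)^{j−1} for j = 1, …, m satisfies L₀ r₀ = 0, and 0 is an eigenvalue of L₀ of algebraic multiplicity exactly one (i.e., 0 is a simple root of the characteristic polynomial of L₀). -/
/-- The m×m complex matrix `L_τ = -ik Ã_τ + B`, where `Ã_τ` has entry `τσ₀` in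
(1-indexed) position (1, m) and `(Ã_τ)_{i+1,j} = P*_{ij}` for `1 ≤ i, j ≤ m-1`,
and `B_{i+1,j+1} = P*_{ij}` with all other entries zero. -/
noncomputable def Lmat (m : ℕ) (σ₀ k τ : ℝ) : Matrix (Fin m) (Fin m) ℂ :=
  (-(Complex.I * (k : ℂ))) • (embedA m (τ * σ₀) (Pstar m σ₀)).map Complex.ofReal
    + (embedB m (Pstar m σ₀)).map Complex.ofReal

/-- The vector `r₀ ∈ ℂ^m` with components `(r₀)_j = (ik)^(j-1)`, `j = 1, …, m`. -/
noncomputable def r0 (m : ℕ) (k : ℝ) : Fin m → ℂ := fun j => (Complex.I * (k : ℂ)) ^ (j : ℕ)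

/-!
Below its zero first row, `L₀` is the product of `P*` with the `(m-1) × m` matrix `S - z T`, where
`z = ik`, and `S`, `T` delete the first, respectively last, coordinate of a vector. Since `S - z T`
annihilates `(1, z, z², …)`, so does `L₀`. Expanding along the zero row, the characteristic
polynomial of `L₀` is `X` times that of the lower right `(m-1) × (m-1)` block. Deleting the first
column of `S - z T` leaves a unit lower triangular matrix, so this block has the same determinant
as `P*`, which is nonzero, and `0` is not a root of its characteristic polynomial.
-/

open Matrix Polynomial

section ZeroRow

variable {R : Type*} [CommRing R] {n : ℕ}

lemma charpoly_of_row_zero {M : Matrix (Fin (n + 1)) (Fin (n + 1)) R} (h : M 0 = 0) :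
    M.charpoly = X * (M.submatrix Fin.succ Fin.succ).charpoly := by
  have hrow (j : Fin n) : M.charmatrix 0 j.succ = 0 := by
    simp [charmatrix_apply_ne _ _ _ (Fin.succ_ne_zero j).symm, h]
  have hminor : M.charmatrix.submatrix Fin.succ Fin.succ =
      (M.submatrix Fin.succ Fin.succ).charmatrix := by
    ext1 i j
    simp [charmatrix_apply, diagonal_apply]
  rw [charpoly, det_succ_row_zero, Fin.sum_univ_succ]
  simp [hrow, hminor, charmatrix_apply_eq, h, charpoly]

lemma rootMultiplicity_zero_charpoly_of_row_zero {M : Matrix (Fin (n + 1)) (Fin (n + 1)) R}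
    (hrow : M 0 = 0) (hdet : (M.submatrix Fin.succ Fin.succ).det ≠ 0) :
    M.charpoly.rootMultiplicity 0 = 1 := by
  have := nontrivial_of_ne _ _ hdet
  set D := M.submatrix Fin.succ Fin.succ
  have hroot : ¬ D.charpoly.IsRoot 0 := fun h ↦ hdet <| by
    rw [det_eq_sign_charpoly_coeff, coeff_zero_eq_eval_zero, h.eq_zero, mul_zero]
  have hmul := rootMultiplicity_mul_X_sub_C_pow (a := 0) (n := 1) (charpoly_monic D).ne_zero
  rw [C_0, sub_zero, pow_one, rootMultiplicity_eq_zero hroot] at hmul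
  rw [charpoly_of_row_zero hrow, mul_comm, hmul]

end ZeroRow

section ShiftSubSmul

variable {R : Type*} [CommRing R]

/-- The matrix of `v ↦ (v (i + 1) - z * v i)ᵢ`, from vectors of length `n + 1` to vectors of
length `n`; it is the factor of `L₀` that does not depend on `P*`. The two selections of
coordinates are encoded as row selections of the identity matrix. -/
def shiftSubSmul (n : ℕ) (z : R) : Matrix (Fin n) (Fin (n + 1)) R :=
  (1 : Matrix (Fin (n + 1)) (Fin (n + 1)) R).submatrix Fin.succ id -
    z • (1 : Matrix (Fin (n + 1)) (Fin (n + 1)) R).submatrix Fin.castSucc id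

lemma shiftSubSmul_mulVec_pow (n : ℕ) (z : R) :
    shiftSubSmul n z *ᵥ (fun j ↦ z ^ (j : ℕ)) = 0 := by
  have hselect (f : Fin n → Fin (n + 1)) (v : Fin (n + 1) → R) :
      (1 : Matrix (Fin (n + 1)) (Fin (n + 1)) R).submatrix f id *ᵥ v = v ∘ f := by
    ext i
    simp [mulVec, dotProduct, one_apply]
  rw [shiftSubSmul, sub_mulVec, smul_mulVec, hselect, hselect]
  ext i
  simp [pow_succ']

lemma det_shiftSubSmul_submatrix_succ (n : ℕ) (z : R) :
    ((shiftSubSmul n z).submatrix id Fin.succ).det = 1 := by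
  rw [det_of_isLowerTriangular]
  · simp [shiftSubSmul, one_apply, Fin.ext_iff]
  · intro i j hij
    have hij : (i : ℕ) < j := hij
    have hne : (i : ℕ) ≠ j + 1 := by omega
    simp [shiftSubSmul, one_apply, Fin.ext_iff, hij.ne, hne]

variable {n : ℕ} {z : R} {M : Matrix (Fin (n + 1)) (Fin (n + 1)) R}
  {Q : Matrix (Fin n) (Fin n) R}

lemma mulVec_pow_eq_zero_of_eq_mul_shiftSubSmul (hrow : M 0 = 0)
    (hM : M.submatrix Fin.succ id = Q * shiftSubSmul n z) :
    M *ᵥ (fun j ↦ z ^ (j : ℕ)) = 0 := by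
  have hsucc : M.submatrix Fin.succ id *ᵥ (fun j ↦ z ^ (j : ℕ)) = 0 := by
    rw [hM, ← mulVec_mulVec, shiftSubSmul_mulVec_pow, mulVec_zero]
  ext i
  cases i using Fin.cases with
  | zero => simp [mulVec, hrow]
  | succ i => exact congrFun hsucc i

lemma rootMultiplicity_zero_charpoly_of_eq_mul_shiftSubSmul (hrow : M 0 = 0)
    (hM : M.submatrix Fin.succ id = Q * shiftSubSmul n z) (hQ : Q.det ≠ 0) :
    M.charpoly.rootMultiplicity 0 = 1 := by
  have hminor : M.submatrix Fin.succ Fin.succ = Q * (shiftSubSmul n z).submatrix id Fin.succ :=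
    congrArg (fun N ↦ N.submatrix id Fin.succ) hM
  apply rootMultiplicity_zero_charpoly_of_row_zero hrow
  rwa [hminor, det_mul, det_shiftSubSmul_submatrix_succ, mul_one]

end ShiftSubSmul

section Pencil

/-- The pencil `-z Ã + B` of `embedA m s P` and `embedB m P`, extending the family `L_τ` to an
arbitrary block `P` and a complex parameter: `L_τ` has `s = τ σ₀`, `P = P*` and `z = ik`. -/
noncomputable def embedPencil (m : ℕ) (s : ℝ) (P : Matrix (Fin (m - 1)) (Fin (m - 1)) ℝ)
    (z : ℂ) : Matrix (Fin m) (Fin m) ℂ :=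
  -z • (embedA m s P).map Complex.ofReal + (embedB m P).map Complex.ofReal

lemma Lmat_eq_embedPencil (m : ℕ) (σ₀ k τ : ℝ) :
    Lmat m σ₀ k τ = embedPencil m (τ * σ₀) (Pstar m σ₀) (Complex.I * k) :=
  rfl

variable {n : ℕ} (s : ℝ) (P : Matrix (Fin n) (Fin n) ℝ)

lemma embedA_submatrix_succ :
    (embedA (n + 1) s P).submatrix Fin.succ id =
      P * (1 : Matrix (Fin (n + 1)) (Fin (n + 1)) ℝ).submatrix Fin.castSucc id := by
  ext i j
  cases j using Fin.lastCases <;> simp [embedA, mul_apply, one_apply, Fin.castSucc_ne_last]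

lemma embedB_submatrix_succ :
    (embedB (n + 1) P).submatrix Fin.succ id =
      P * (1 : Matrix (Fin (n + 1)) (Fin (n + 1)) ℝ).submatrix Fin.succ id := by
  ext i j
  cases j using Fin.cases <;> simp [embedB, mul_apply, one_apply]

lemma embedPencil_row_zero (z : ℂ) : embedPencil (n + 1) 0 P z 0 = 0 := by
  ext j
  simp [embedPencil, embedA, embedB]

lemma embedPencil_submatrix_succ (z : ℂ) :
    (embedPencil (n + 1) s P z).submatrix Fin.succ id =
      P.map Complex.ofReal * shiftSubSmul n z := by
  have hmap (f : Fin n → Fin (n + 1)) :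
      (P * (1 : Matrix (Fin (n + 1)) (Fin (n + 1)) ℝ).submatrix f id).map Complex.ofReal =
        P.map Complex.ofReal * (1 : Matrix (Fin (n + 1)) (Fin (n + 1)) ℂ).submatrix f id := by
    ext i j
    simp [mul_apply, one_apply, apply_ite Complex.ofReal]
  calc (embedPencil (n + 1) s P z).submatrix Fin.succ id
      = -z • ((embedA (n + 1) s P).submatrix Fin.succ id).map Complex.ofReal +
          ((embedB (n + 1) P).submatrix Fin.succ id).map Complex.ofReal := rfl
    _ = P.map Complex.ofReal * shiftSubSmul n z := by
      rw [embedA_submatrix_succ, embedB_submatrix_succ, hmap, hmap, shiftSubSmul, Matrix.mul_sub,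
        Matrix.mul_smul, neg_smul, neg_add_eq_sub]

end Pencil

lemma det_ne_zero_of_perm_support {ι R : Type*} [Fintype ι] [DecidableEq ι] [CommRing R]
    [IsDomain R] {P : Matrix ι ι R} (σ : Equiv.Perm ι) (hzero : ∀ i j, j ≠ σ i → P i j = 0)
    (hne : ∀ i, P i (σ i) ≠ 0) : P.det ≠ 0 := by
  have hdiag : P.submatrix id σ = diagonal fun i ↦ P i (σ i) := by
    ext i j
    rcases eq_or_ne i j with rfl | hij
    · simp
    · simpa [hij] using hzero i (σ j) (σ.injective.ne hij.symm)
  have hprod : (P.submatrix id σ).det ≠ 0 := by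
    rw [hdiag, det_diagonal]
    exact Finset.prod_ne_zero_iff.2 fun i _ ↦ hne i
  exact right_ne_zero_of_mul (det_permute' σ P ▸ hprod)

lemma det_Pstar_ne_zero (m : ℕ) {σ₀ : ℝ} (hσ : σ₀ ≠ 0) : (Pstar m σ₀).det ≠ 0 := by
  refine det_ne_zero_of_perm_support Fin.revPerm (fun i j hij ↦ if_neg fun h ↦ hij ?_) fun i ↦ ?_
  · rw [Fin.revPerm_apply, Fin.ext_iff, Fin.val_rev]
    omega
  · have hi : (i : ℕ) + (Fin.revPerm i : ℕ) + 2 = m := by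
      rw [Fin.revPerm_apply, Fin.val_rev]
      omega
    rw [Pstar, if_pos hi]
    split_ifs <;> simp [hσ]

theorem stmt9_general {m : ℕ} (hm : m ≠ 0) {P : Matrix (Fin (m - 1)) (Fin (m - 1)) ℝ}
    (hP : P.det ≠ 0) (z : ℂ) :
    embedPencil m 0 P z *ᵥ (fun j ↦ z ^ (j : ℕ)) = 0 ∧
      (embedPencil m 0 P z).charpoly.rootMultiplicity 0 = 1 := by
  obtain ⟨n, rfl⟩ := Nat.exists_eq_succ_of_ne_zero hm
  have hrow := embedPencil_row_zero (n := n) P z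
  have hfactor := embedPencil_submatrix_succ (n := n) 0 P z
  have hdet : (P.map Complex.ofReal).det ≠ 0 := by
    have hmap : (P.map Complex.ofReal).det = P.det := (Complex.ofRealHom.map_det P).symm
    rw [hmap]
    exact Complex.ofReal_ne_zero.2 hP
  exact ⟨mulVec_pow_eq_zero_of_eq_mul_shiftSubSmul hrow hfactor,
    rootMultiplicity_zero_charpoly_of_eq_mul_shiftSubSmul hrow hfactor hdet⟩

/-- The vector `r₀` with `(r₀)_j = (ik)^(j-1)` satisfies `L₀ r₀ = 0`,
and `0` is an eigenvalue of `L₀` of algebraic multiplicity exactly one. -/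
theorem stmt9 (m : ℕ) (hm : 2 ≤ m) (σ₀ : ℝ) (hσ : σ₀ = 1 ∨ σ₀ = -1) (k : ℝ) :
    (Lmat m σ₀ k 0).mulVec (r0 m k) = 0 ∧
    Polynomial.rootMultiplicity (0 : ℂ) (Lmat m σ₀ k 0).charpoly = 1 := by
  have hσ₀ : σ₀ ≠ 0 := by rcases hσ with rfl | rfl <;> norm_num
  rw [Lmat_eq_embedPencil, zero_mul]
  exact stmt9_general (by omega) (det_Pstar_ne_zero m hσ₀) (Complex.I * k)
end

section
/- Let m ≥ 3 be odd, σ₀ ∈ {1, −1}, and let k ∈ ℝ with k ≠ 0. Then the matrix L₀ has m pairwise distinct complex eigenvalues (hence is diagonalizable), and every eigenvalue of L₀ has zero real part. -/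
/-!
The rows of `L₀` give `L₀ r₀ = 0`, and its first row vanishes, so the shear replacing the first
basis vector by `r₀` conjugates `L₀` to the matrix `N` obtained from it by clearing the first
column. For odd `m` the signs of `P*` make `N` skew-Hermitian: counting indices from `0`, its two
antidiagonals `i + j = m` and `i + j = m - 1` carry respectively real entries with opposite signs
at transposed positions and imaginary entries with equal ones. Hence `L₀` is diagonalizable with
imaginary eigenvalues. These are distinct because the eigenspaces are lines: the eigenvector
equation is a recursion along the path `0, m - 1, 1, m - 2, …`, so one coordinate of an
eigenvector determines all the others.
-/

theorem finrank_le_one_of_apply_eq_zero_imp {n K : Type*} [DivisionRing K]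
    (W : Submodule K (n → K)) (p : n) (h : ∀ v ∈ W, v p = 0 → v = 0) :
    Module.finrank K W ≤ 1 := by
  have hinj : Function.Injective ((LinearMap.proj p : (n → K) →ₗ[K] K).domRestrict W) :=
    (injective_iff_map_eq_zero _).2 fun v hv ↦ Subtype.ext (h v v.2 hv)
  simpa using LinearMap.finrank_le_finrank_of_injective hinj

section SimilarToDiagonal

open Matrix Module End

variable {n R K : Type*} [Fintype n] [DecidableEq n] [CommRing R] [Field K]

theorem roots_charpoly_units_conj_diagonal [IsDomain R] (Q : (Matrix n n R)ˣ) (d : n → R) :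
    (Q.val * diagonal d * Q⁻¹.val).charpoly.roots = Finset.univ.val.map d := by
  rw [coe_units_inv, charpoly_units_conj, charpoly_diagonal,
    ← Polynomial.roots_multiset_prod_X_sub_C (Finset.univ.val.map d), Multiset.map_map]
  rfl

theorem units_conj_diagonal_mulVec_col (Q : (Matrix n n R)ˣ) (d : n → R) (a : n) :
    (Q.val * diagonal d * Q⁻¹.val) *ᵥ Q.val.col a = d a • Q.val.col a := by
  rw [← mulVec_single_one, mulVec_mulVec, Units.inv_mul_cancel_right, ← mulVec_mulVec,
    diagonal_mulVec_single, mul_one, ← mulVec_smul, ← Pi.single_smul', smul_eq_mul, mul_one]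

theorem injective_of_finrank_eigenspace_le_one {Q : (Matrix n n K)ˣ} {d : n → K}
    (h : ∀ z, finrank K (eigenspace (Q.val * diagonal d * Q⁻¹.val).toLin' z) ≤ 1) :
    Function.Injective d := by
  intro a b hab
  have mem_eigenspace (c : {c // d c = d a}) :
      Q.val.col c ∈ eigenspace (Q.val * diagonal d * Q⁻¹.val).toLin' (d a) := by
    rw [mem_eigenspace_iff, toLin'_apply, units_conj_diagonal_mulVec_col, c.2]
  have hcols : LinearIndependent K fun c : {c // d c = d a} ↦ Q.val.col c :=
    (linearIndependent_cols_of_isUnit Q.isUnit).comp _ Subtype.val_injective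
  have hind : LinearIndependent K fun c : {c // d c = d a} ↦
      Subtype.mk (Q.val.col c) (mem_eigenspace c) :=
    .of_comp (Submodule.subtype _) hcols
  classical
  have hcard : Fintype.card {c // d c = d a} ≤ 1 := hind.fintype_card_le_finrank.trans (h (d a))
  exact congrArg Subtype.val (Fintype.card_le_one_iff.1 hcard ⟨a, rfl⟩ ⟨b, hab.symm⟩)

theorem exists_units_conj_diagonal_of_mem_skewAdjoint {N : Matrix n n ℂ}
    (hN : N ∈ skewAdjoint (Matrix n n ℂ)) :
    ∃ (U : (Matrix n n ℂ)ˣ) (μ : n → ℝ),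
      N = U.val * diagonal (fun a ↦ Complex.I * μ a) * U⁻¹.val := by
  have hH : (-Complex.I • N).IsHermitian :=
    isHermitian_iff_isSelfAdjoint.2 (skewAdjoint.negISMul ⟨N, hN⟩).2
  refine ⟨Unitary.toUnits hH.eigenvectorUnitary, hH.eigenvalues, ?_⟩
  have hdiag : diagonal (fun a ↦ Complex.I * (hH.eigenvalues a : ℂ)) =
      Complex.I • diagonal (RCLike.ofReal ∘ hH.eigenvalues) := by
    rw [← diagonal_smul]
    rfl
  calc N = Complex.I • (-Complex.I • N) := (skewAdjoint.I_smul_neg_I ⟨N, hN⟩).symm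
    _ = Complex.I • (hH.eigenvectorUnitary.val * diagonal (RCLike.ofReal ∘ hH.eigenvalues) *
          star hH.eigenvectorUnitary.val) :=
      congrArg (Complex.I • ·) (hH.spectral_theorem.trans (Unitary.conjStarAlgAut_apply _ _))
    _ = hH.eigenvectorUnitary.val * diagonal (fun a ↦ Complex.I * (hH.eigenvalues a : ℂ)) *
          star hH.eigenvectorUnitary.val := by
      rw [hdiag, mul_smul_comm, smul_mul_assoc]

theorem det_one_updateCol (i : n) (v : n → R) : ((1 : Matrix n n R).updateCol i v).det = v i := by
  rw [← cramer_apply, cramer_one, Module.End.one_apply]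

theorem exists_units_conj_updateCol_zero {A : Matrix n n R} {i : n} {v : n → R}
    (hA : A i = 0) (hv : A *ᵥ v = 0) (hvi : IsUnit (v i)) :
    ∃ P : (Matrix n n R)ˣ, A = P.val * A.updateCol i 0 * P⁻¹.val := by
  obtain ⟨P, hP⟩ : IsUnit ((1 : Matrix n n R).updateCol i v) := by
    rwa [isUnit_iff_isUnit_det, det_one_updateCol]
  have hAP : A * P.val = A.updateCol i 0 := by rw [hP, mul_updateCol, mul_one, hv]
  have hPN : P.val * A.updateCol i 0 = A.updateCol i 0 := by
    conv_rhs => rw [← one_mul (A.updateCol i 0)]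
    ext a b
    refine Finset.sum_congr rfl fun c _ ↦ ?_
    rcases eq_or_ne c i with rfl | hc
    · simp [updateCol_apply, hA]
    · simp [hP, updateCol_ne hc]
  exact ⟨P, by rw [hPN, ← hAP, Units.mul_inv_cancel_right]⟩

end SimilarToDiagonal

section LZero

open Matrix Module End

variable {m : ℕ} {σ₀ k : ℝ}

theorem Pstar_apply_of_odd (hm : Odd m) (i j : Fin (m - 1)) :
    Pstar m σ₀ i j = if (i : ℕ) + j + 2 = m then σ₀ * (-1) ^ (i + 1 : ℕ) else 0 := by
  unfold Pstar
  split_ifs with hij hj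
  · rw [neg_one_pow_congr (m := j) (n := i + 1) (by grind)]
  · rw [neg_one_pow_congr (m := m - (j + 1)) (n := i + 1) (by grind)]
  · rfl

theorem embedA_zero_Pstar_apply_of_odd (hm : Odd m) (i j : Fin m) :
    embedA m 0 (Pstar m σ₀) i j =
      if (i : ℕ) ≠ 0 ∧ (i : ℕ) + j + 1 = m then σ₀ * (-1) ^ (i : ℕ) else 0 := by
  simp only [embedA, Pstar_apply_of_odd hm]
  grind

theorem embedB_Pstar_apply_of_odd (hm : Odd m) (i j : Fin m) :
    embedB m (Pstar m σ₀) i j = if (i : ℕ) + j = m then σ₀ * (-1) ^ (i : ℕ) else 0 := by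
  simp only [embedB, Pstar_apply_of_odd hm]
  grind

theorem Lmat_zero_apply (hm : Odd m) (i j : Fin m) :
    Lmat m σ₀ k 0 i j =
      (if (i : ℕ) ≠ 0 ∧ (i : ℕ) + j + 1 = m then
        -(Complex.I * k) * (σ₀ * (-1) ^ (i : ℕ)) else 0) +
      (if (i : ℕ) + j = m then (σ₀ * (-1) ^ (i : ℕ) : ℂ) else 0) := by
  simp only [Lmat, zero_mul, Matrix.add_apply, Matrix.smul_apply, map_apply, smul_eq_mul,
    embedA_zero_Pstar_apply_of_odd hm, embedB_Pstar_apply_of_odd hm]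
  push_cast [apply_ite Complex.ofReal, mul_ite, mul_zero]
  rfl

theorem Lmat_zero_mulVec_apply (hm : Odd m) (v : Fin m → ℂ) {i a b : Fin m}
    (ha : (i : ℕ) + a + 1 = m) (hb : (i : ℕ) + b = m) :
    (Lmat m σ₀ k 0 *ᵥ v) i = σ₀ * (-1) ^ (i : ℕ) * (v b - Complex.I * k * v a) := by
  have hi : (i : ℕ) ≠ 0 := by omega
  have ha' (j : Fin m) : (i : ℕ) + j + 1 = m ↔ j = a := by omega
  have hb' (j : Fin m) : (i : ℕ) + j = m ↔ j = b := by omega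
  simp only [mulVec, dotProduct, Lmat_zero_apply hm, ha', hb', hi, ne_eq, not_false_eq_true,
    true_and, add_mul, ite_mul, zero_mul, Finset.sum_add_distrib, Finset.sum_ite_eq',
    Finset.mem_univ, if_true]
  ring

theorem apply_eq_zero_iff_of_Lmat_zero_mulVec_apply_eq_zero (hm : Odd m) (hσ : σ₀ ≠ 0)
    (hk : k ≠ 0) {v : Fin m → ℂ} {i a b : Fin m} (ha : (i : ℕ) + a + 1 = m) (hb : (i : ℕ) + b = m)
    (hv : (Lmat m σ₀ k 0 *ᵥ v) i = 0) : v a = 0 ↔ v b = 0 := by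
  have hvb : v b = Complex.I * k * v a := by
    simpa [Lmat_zero_mulVec_apply hm v ha hb, hσ, sub_eq_zero] using hv
  simp [hvb, hk]

section NeZero

variable [NeZero m]

theorem Lmat_zero_row_zero (hm : Odd m) : Lmat m σ₀ k 0 0 = 0 := by
  ext j
  simp only [Lmat_zero_apply hm, Fin.val_zero, ne_eq, not_true_eq_false, false_and, if_false,
    zero_add, j.isLt.ne, Pi.zero_apply]

theorem Lmat_zero_mulVec_r0 (hm : Odd m) : Lmat m σ₀ k 0 *ᵥ r0 m k = 0 := by
  ext i
  rcases eq_or_ne i 0 with rfl | hi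
  · simp [mulVec, Lmat_zero_row_zero hm]
  · have hi' : (i : ℕ) ≠ 0 := Fin.val_ne_zero_iff.2 hi
    rw [Lmat_zero_mulVec_apply hm (r0 m k) (a := ⟨m - 1 - i, by omega⟩)
      (b := ⟨m - 1 - i + 1, by omega⟩) (by grind) (by grind)]
    simp [r0, pow_succ']

theorem Lmat_zero_updateCol_zero_mem_skewAdjoint (hm : Odd m) :
    (Lmat m σ₀ k 0).updateCol 0 0 ∈ skewAdjoint (Matrix (Fin m) (Fin m) ℂ) := by
  rw [skewAdjoint.mem_iff]
  ext i j
  rw [star_apply, Matrix.neg_apply, updateCol_apply, updateCol_apply]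
  rcases eq_or_ne i 0 with rfl | hi
  · simp [Lmat_zero_row_zero hm]
  rcases eq_or_ne j 0 with rfl | hj
  · simp [hi, Lmat_zero_row_zero hm]
  have hi' : (i : ℕ) ≠ 0 := Fin.val_ne_zero_iff.2 hi
  have hj' : (j : ℕ) ≠ 0 := Fin.val_ne_zero_iff.2 hj
  rw [if_neg hi, if_neg hj, Lmat_zero_apply hm, Lmat_zero_apply hm, add_comm (j : ℕ)]
  rcases eq_or_ne ((i : ℕ) + j + 1) m with hsum_succ | hsum_succ
  · have hsign : (-1 : ℂ) ^ (j : ℕ) = (-1) ^ (i : ℕ) := neg_one_pow_congr (by grind)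
    simp [hi', hj', hsum_succ, hsign, show (i : ℕ) + j ≠ m by omega]
  rcases eq_or_ne ((i : ℕ) + j) m with hsum | hsum
  · have hsign : (-1 : ℂ) ^ (j : ℕ) = -(-1) ^ (i : ℕ) := by
      rw [neg_one_pow_congr (n := i + 1) (by grind), pow_succ, mul_neg_one]
    simp [hsum, hsign]
  · simp [hsum_succ, hsum]

theorem eq_zero_of_Lmat_zero_mulVec_eq_zero (hm : Odd m) (hσ : σ₀ ≠ 0) (hk : k ≠ 0)
    {v : Fin m → ℂ} (hv : Lmat m σ₀ k 0 *ᵥ v = 0) (hv0 : v 0 = 0) : v = 0 := by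
  suffices hcoord : ∀ n (hn : n < m), v ⟨n, hn⟩ = 0 from funext fun i ↦ hcoord i i.isLt
  intro n hn
  induction n with
  | zero => exact hv0
  | succ n ih =>
    have hrow := congrFun hv (⟨n, by omega⟩ : Fin m).rev
    exact (apply_eq_zero_iff_of_Lmat_zero_mulVec_apply_eq_zero hm hσ hk (by grind) (by grind)
      hrow).1 (ih (by omega))

theorem eq_zero_of_Lmat_zero_mulVec_eq_smul (hm : Odd m) (hσ : σ₀ ≠ 0) (hk : k ≠ 0)
    {v : Fin m → ℂ} {z : ℂ} (hz : z ≠ 0) (hv : Lmat m σ₀ k 0 *ᵥ v = z • v)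
    (hv0 : v (Fin.rev 0) = 0) : v = 0 := by
  have hrow {i : Fin m} (hi : v i = 0) : (Lmat m σ₀ k 0 *ᵥ v) i = 0 := by simp [hv, hi]
  suffices hcoord : ∀ n (hn : n < m), v ⟨n, hn⟩ = 0 ∧ v (Fin.rev ⟨n, hn⟩) = 0 from
    funext fun i ↦ (hcoord i i.isLt).1
  intro n hn
  induction n with
  | zero =>
    have h0 : z * v 0 = 0 := by
      simpa [mulVec, Lmat_zero_row_zero hm, eq_comm] using congrFun hv 0
    exact ⟨(mul_eq_zero.1 h0).resolve_left hz, hv0⟩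
  | succ n ih =>
    obtain ⟨hleft, hright⟩ := ih (by omega)
    have hleft' : v ⟨n + 1, hn⟩ = 0 :=
      (apply_eq_zero_iff_of_Lmat_zero_mulVec_apply_eq_zero hm hσ hk (by grind) (by grind)
        (hrow hright)).1 hleft
    exact ⟨hleft', (apply_eq_zero_iff_of_Lmat_zero_mulVec_apply_eq_zero hm hσ hk (by grind)
      (by grind) (hrow hleft')).2 hright⟩

end NeZero

theorem exists_Lmat_zero_eq_units_conj_diagonal (hm : Odd m) (σ₀ k : ℝ) :
    ∃ (Q : (Matrix (Fin m) (Fin m) ℂ)ˣ) (μ : Fin m → ℝ),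
      Lmat m σ₀ k 0 = Q.val * diagonal (fun a ↦ Complex.I * μ a) * Q⁻¹.val := by
  have : NeZero m := ⟨hm.pos.ne'⟩
  have hr0 : IsUnit (r0 m k 0) := by simp [r0]
  obtain ⟨P, hP⟩ := exists_units_conj_updateCol_zero
    (Lmat_zero_row_zero (σ₀ := σ₀) hm) (Lmat_zero_mulVec_r0 hm) hr0
  obtain ⟨U, μ, hU⟩ := exists_units_conj_diagonal_of_mem_skewAdjoint
    (Lmat_zero_updateCol_zero_mem_skewAdjoint (σ₀ := σ₀) (k := k) hm)
  refine ⟨P * U, μ, ?_⟩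
  rw [hP, hU]
  simp only [_root_.mul_inv_rev, Units.val_mul, mul_assoc]

theorem finrank_eigenspace_Lmat_zero_le_one (hm : Odd m) (hσ : σ₀ ≠ 0) (hk : k ≠ 0) (z : ℂ) :
    finrank ℂ (eigenspace (Lmat m σ₀ k 0).toLin' z) ≤ 1 := by
  have : NeZero m := ⟨hm.pos.ne'⟩
  rcases eq_or_ne z 0 with rfl | hz
  · refine finrank_le_one_of_apply_eq_zero_imp _ 0 fun v hv ↦ ?_
    exact eq_zero_of_Lmat_zero_mulVec_eq_zero hm hσ hk (by simpa using hv)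
  · refine finrank_le_one_of_apply_eq_zero_imp _ (Fin.rev 0) fun v hv ↦ ?_
    exact eq_zero_of_Lmat_zero_mulVec_eq_smul hm hσ hk hz (by simpa using mem_eigenspace_iff.1 hv)

end LZero

theorem stmt10_general {m : ℕ} (hm : Odd m) {σ₀ : ℝ} (hσ : σ₀ ≠ 0) {k : ℝ} (hk : k ≠ 0) :
    (Multiset.card (Lmat m σ₀ k 0).charpoly.roots = m ∧
      (Lmat m σ₀ k 0).charpoly.roots.Nodup) ∧
    (∃ (Q : Matrix (Fin m) (Fin m) ℂ) (d : Fin m → ℂ),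
      IsUnit Q.det ∧ Lmat m σ₀ k 0 = Q * Matrix.diagonal d * Q⁻¹) ∧
    ∀ z ∈ spectrum ℂ (Lmat m σ₀ k 0), z.re = 0 := by
  obtain ⟨Q, μ, hL⟩ := exists_Lmat_zero_eq_units_conj_diagonal hm σ₀ k
  have hinj : Function.Injective fun a ↦ Complex.I * (μ a : ℂ) :=
    injective_of_finrank_eigenspace_le_one (Q := Q)
      (hL ▸ finrank_eigenspace_Lmat_zero_le_one hm hσ hk)
  have hQ : IsUnit Q.val.det := (Matrix.isUnit_iff_isUnit_det _).1 Q.isUnit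
  refine ⟨⟨?_, ?_⟩, ⟨Q, fun a ↦ Complex.I * μ a, hQ, ?_⟩, ?_⟩
  · rw [hL, roots_charpoly_units_conj_diagonal, Multiset.card_map, Finset.card_val,
      Finset.card_univ, Fintype.card_fin]
  · rw [hL, roots_charpoly_units_conj_diagonal]
    exact Finset.univ.nodup.map hinj
  · rw [hL, Matrix.coe_units_inv]
  · rw [hL, spectrum.units_conjugate, spectrum_diagonal]
    rintro _ ⟨a, rfl⟩
    simp

/-- For odd `m ≥ 3` and `k ≠ 0`, the matrix `L₀` has `m` pairwise
distinct complex eigenvalues (hence is diagonalizable), and every eigenvalue of `L₀`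
has zero real part. -/
theorem stmt10 (m : ℕ) (hm : 3 ≤ m) (hodd : Odd m) (σ₀ : ℝ) (hσ : σ₀ = 1 ∨ σ₀ = -1)
    (k : ℝ) (hk : k ≠ 0) :
    (Multiset.card (Lmat m σ₀ k 0).charpoly.roots = m ∧
      (Lmat m σ₀ k 0).charpoly.roots.Nodup) ∧
    (∃ (Q : Matrix (Fin m) (Fin m) ℂ) (d : Fin m → ℂ),
      IsUnit Q.det ∧ Lmat m σ₀ k 0 = Q * Matrix.diagonal d * Q⁻¹) ∧
    ∀ z ∈ spectrum ℂ (Lmat m σ₀ k 0), z.re = 0 :=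
  stmt10_general hodd (by rcases hσ with rfl | rfl <;> norm_num) hk
end

section
/- Let τ > 0 and let k ∈ ℝ satisfy 4k²τ ≤ 1/2. Then the root ω₊(k) = (i/(2τ))(−1 + √(1 − 4k²τ)) of the equation τω² + iω − k² = 0 satisfies |ω₊(k) + ik²| ≤ 2τk⁴. In particular, ω₊(k) approximates the dispersion relation ω = −ik² of the heat equation ∂ₜu = ∂ₓ²u with error O(τk⁴). -/
/-!
A root `ω` of `τω² + iω - k² = 0` satisfies `ω + ik² = iτω²`: its distance from the heat
frequency `-ik²` is exactly the size of the quadratic term which `τ → 0` removes. Rationalising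
`-1 + s`, where `s² = 1 - 4k²τ`, gives `ω₊ = -2ik² / (1 + s)`, so `|ω₊| ≤ √2 |k|²` as soon as
`√2 ≤ |1 + s|`, and then `|ω₊ + ik²| = |τ| |ω₊|² ≤ 2 |τ| |k|⁴`.
-/

section

open Complex

/-- The root `ω₊ = (i/(2τ))(-1 + s)` of the dispersion relation `τω² + iω - k² = 0`. The wavenumber
`k` enters only through `s`, a square root of `1 - 4k²τ`, which is left as a parameter so that the
algebra applies to either branch. -/
noncomputable def dispersionRoot (τ s : ℂ) : ℂ :=
  I / (2 * τ) * (-1 + s)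

variable {τ k s ω : ℂ}

lemma add_I_mul_sq_eq_of_dispersion (h : τ * ω ^ 2 + I * ω - k ^ 2 = 0) :
    ω + I * k ^ 2 = I * (τ * ω ^ 2) := by
  linear_combination -I * h + ω * I_mul_I

lemma dispersionRoot_isRoot (hτ : τ ≠ 0) (hs : s ^ 2 = 1 - 4 * k ^ 2 * τ) :
    τ * dispersionRoot τ s ^ 2 + I * dispersionRoot τ s - k ^ 2 = 0 := by
  have discrim_eq : discrim τ I (-k ^ 2) = (I * s) * (I * s) := by
    rw [discrim]
    linear_combination (1 - s ^ 2) * I_sq + hs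
  have root_eq : dispersionRoot τ s = (-I + I * s) / (2 * τ) := by
    rw [dispersionRoot]
    ring
  linear_combination (quadratic_eq_zero_iff hτ discrim_eq _).2 (.inl root_eq)

lemma dispersionRoot_mul_one_add (hτ : τ ≠ 0) (hs : s ^ 2 = 1 - 4 * k ^ 2 * τ) :
    dispersionRoot τ s * (1 + s) = -2 * I * k ^ 2 := by
  rw [dispersionRoot]
  field_simp
  linear_combination hs

lemma norm_dispersionRoot_le (hτ : τ ≠ 0) (hs : s ^ 2 = 1 - 4 * k ^ 2 * τ)
    (hs_norm : √2 ≤ ‖1 + s‖) : ‖dispersionRoot τ s‖ ≤ √2 * ‖k‖ ^ 2 := by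
  refine le_of_mul_le_mul_right ?_ (Real.sqrt_pos.2 two_pos)
  calc
    ‖dispersionRoot τ s‖ * √2 ≤ ‖dispersionRoot τ s‖ * ‖1 + s‖ := by gcongr
    _ = 2 * ‖k‖ ^ 2 := by
      rw [← norm_mul, dispersionRoot_mul_one_add hτ hs]
      simp
    _ = √2 * ‖k‖ ^ 2 * √2 := by
      linear_combination -‖k‖ ^ 2 * Real.sq_sqrt zero_le_two

lemma norm_dispersionRoot_add_I_mul_sq_le (hτ : τ ≠ 0) (hs : s ^ 2 = 1 - 4 * k ^ 2 * τ)
    (hs_norm : √2 ≤ ‖1 + s‖) :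
    ‖dispersionRoot τ s + I * k ^ 2‖ ≤ 2 * ‖τ‖ * ‖k‖ ^ 4 := by
  calc
    ‖dispersionRoot τ s + I * k ^ 2‖ = ‖τ‖ * ‖dispersionRoot τ s‖ ^ 2 := by
      rw [add_I_mul_sq_eq_of_dispersion (dispersionRoot_isRoot hτ hs)]
      simp
    _ ≤ ‖τ‖ * (√2 * ‖k‖ ^ 2) ^ 2 := by
      gcongr
      exact norm_dispersionRoot_le hτ hs hs_norm
    _ = 2 * ‖τ‖ * ‖k‖ ^ 4 := by
      rw [mul_pow, Real.sq_sqrt zero_le_two]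
      ring

lemma le_re_of_sq_le_re_sq {a : ℝ} (hre : 0 ≤ s.re) (h : a ^ 2 ≤ (s ^ 2).re) : a ≤ s.re := by
  refine le_of_sq_le_sq ?_ hre
  calc
    a ^ 2 ≤ s.re ^ 2 - s.im ^ 2 := by simpa only [sq, mul_re] using h
    _ ≤ s.re ^ 2 := sub_le_self _ (sq_nonneg _)

end

-- `2(√2 - 1) = 1 - (√2 - 1)²`, so for real `1 - 4k²τ ≥ 0` the last hypothesis says `√2 ≤ 1 + s`.
theorem stmt15_general {τ k s : ℂ} (hτ : τ ≠ 0) (hs : s ^ 2 = 1 - 4 * k ^ 2 * τ)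
    (hre : 0 ≤ s.re) (hk : (4 * k ^ 2 * τ).re ≤ 2 * (√2 - 1)) :
    τ * dispersionRoot τ s ^ 2 + Complex.I * dispersionRoot τ s - k ^ 2 = 0 ∧
      ‖dispersionRoot τ s + Complex.I * k ^ 2‖ ≤ 2 * ‖τ‖ * ‖k‖ ^ 4 := by
  have sq_le : (√2 - 1) ^ 2 ≤ (s ^ 2).re := by
    rw [hs, Complex.sub_re, Complex.one_re]
    linarith [Real.sq_sqrt zero_le_two]
  have hs_norm : √2 ≤ ‖1 + s‖ := calc
    √2 ≤ (1 + s).re := by simpa using sub_le_iff_le_add'.1 (le_re_of_sq_le_re_sq hre sq_le)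
    _ ≤ ‖1 + s‖ := Complex.re_le_norm _
  exact ⟨dispersionRoot_isRoot hτ hs, norm_dispersionRoot_add_I_mul_sq_le hτ hs hs_norm⟩

/-- For `τ > 0` and `4k²τ ≤ 1/2`, the root
`ω₊ = (i/(2τ))(-1 + √(1 - 4k²τ))` of `τω² + iω - k² = 0` satisfies
`|ω₊ + ik²| ≤ 2τk⁴`. -/
theorem stmt15 (τ : ℝ) (hτ : 0 < τ) (k : ℝ) (hk : 4 * k ^ 2 * τ ≤ 1 / 2) :
    (τ : ℂ) * (Complex.I / (2 * (τ : ℂ)) *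
        (-1 + (Real.sqrt (1 - 4 * k ^ 2 * τ) : ℂ))) ^ 2 +
      Complex.I * (Complex.I / (2 * (τ : ℂ)) *
        (-1 + (Real.sqrt (1 - 4 * k ^ 2 * τ) : ℂ))) - (k : ℂ) ^ 2 = 0 ∧
    norm (Complex.I / (2 * (τ : ℂ)) *
        (-1 + (Real.sqrt (1 - 4 * k ^ 2 * τ) : ℂ)) + Complex.I * (k : ℂ) ^ 2)
      ≤ 2 * τ * k ^ 4 := by
  have sqrt_two_ge : 5 / 4 ≤ √2 := Real.le_sqrt_of_sq_le (by norm_num)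
  simpa [dispersionRoot, abs_of_pos hτ, Even.pow_abs (show Even 4 by decide)] using
    stmt15_general (τ := τ) (k := k) (s := √(1 - 4 * k ^ 2 * τ)) (mod_cast hτ.ne')
      (mod_cast Real.sq_sqrt (by linarith)) (Real.sqrt_nonneg _)
      (mod_cast hk.trans (by linarith))
end

section
/- Let τ > 0 and k ∈ ℝ. Then both roots of the quadratic equation τω² + ω − k² = 0 are real, given by ω± = (−1 ± √(1 + 4k²τ))/(2τ), and the root ω₊ = (−1 + √(1 + 4k²τ))/(2τ) satisfies |ω₊ − k²| ≤ τk⁴. In particular, ω₊ approximates the dispersion relation ω = k² of the linear Schrödinger equation i∂ₜu + ∂ₓ²u = 0 with error O(τk⁴). -/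
/-!
Since `τω₊² + ω₊ = k²`, the error `k² - ω₊` is exactly `τω₊²`. It is nonnegative, so
`0 ≤ ω₊ ≤ k²`, and feeding this back gives `τω₊² ≤ τk⁴`.
-/

theorem ofReal_quadratic_eq_zero_iff {a b c : ℝ} (ha : a ≠ 0) (h : 0 ≤ discrim a b c) (z : ℂ) :
    (a : ℂ) * z ^ 2 + b * z + c = 0 ↔
      z = (((-b + √(discrim a b c)) / (2 * a) : ℝ) : ℂ) ∨
        z = (((-b - √(discrim a b c)) / (2 * a) : ℝ) : ℂ) := by
  have discrim_eq : discrim (a : ℂ) b c = √(discrim a b c) * √(discrim a b c) := by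
    rw [← Complex.ofReal_mul, Real.mul_self_sqrt h]
    simp only [discrim]
    push_cast
    rfl
  push_cast
  rw [sq]
  exact quadratic_eq_zero_iff (Complex.ofReal_ne_zero.mpr ha) discrim_eq z

theorem sq_le_discrim {R : Type*} [CommRing R] [LinearOrder R] [IsStrictOrderedRing R]
    {a b c : R} (hac : a * c ≤ 0) : b ^ 2 ≤ discrim a b c := by
  rw [discrim]
  linarith

theorem abs_sub_le_mul_sq_of_mul_sq_add_eq {R : Type*} [CommRing R] [LinearOrder R]
    [IsStrictOrderedRing R] {a x y : R} (ha : 0 ≤ a) (hx : 0 ≤ x) (h : a * x ^ 2 + x = y) :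
    |x - y| ≤ a * y ^ 2 := by
  have error_nonneg : 0 ≤ a * x ^ 2 := by positivity
  have hxy : x ≤ y := by linarith
  calc |x - y| = a * x ^ 2 := by
        rw [abs_sub_comm, ← h, add_sub_cancel_right, abs_of_nonneg error_nonneg]
    _ ≤ a * y ^ 2 := by gcongr

/-- For `τ > 0` and `k ∈ ℝ`, both roots of `τω² + ω - k² = 0` are
real, given by `ω± = (-1 ± √(1 + 4k²τ))/(2τ)`, and `|ω₊ - k²| ≤ τk⁴`. -/
theorem stmt16 (τ : ℝ) (hτ : 0 < τ) (k : ℝ) :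
    (∀ ω : ℂ, (τ : ℂ) * ω ^ 2 + ω - (k : ℂ) ^ 2 = 0 ↔
      (ω = (((-1 + Real.sqrt (1 + 4 * k ^ 2 * τ)) / (2 * τ) : ℝ) : ℂ) ∨
       ω = (((-1 - Real.sqrt (1 + 4 * k ^ 2 * τ)) / (2 * τ) : ℝ) : ℂ))) ∧
    |(-1 + Real.sqrt (1 + 4 * k ^ 2 * τ)) / (2 * τ) - k ^ 2| ≤ τ * k ^ 4 := by
  have discrim_eq : discrim τ 1 (-k ^ 2) = 1 + 4 * k ^ 2 * τ := by
    rw [discrim]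
    ring
  have one_le_discrim : 1 ^ 2 ≤ discrim τ 1 (-k ^ 2) :=
    sq_le_discrim (mul_nonpos_of_nonneg_of_nonpos hτ.le (neg_nonpos.mpr (sq_nonneg k)))
  have roots (ω : ℂ) := ofReal_quadratic_eq_zero_iff hτ.ne' ((sq_nonneg 1).trans one_le_discrim) ω
  have one_le_sqrt := Real.le_sqrt_of_sq_le one_le_discrim
  simp only [discrim_eq, Complex.ofReal_one, one_mul, Complex.ofReal_neg, Complex.ofReal_pow,
    ← sub_eq_add_neg] at roots one_le_sqrt
  refine ⟨roots, ?_⟩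
  set ω := (-1 + √(1 + 4 * k ^ 2 * τ)) / (2 * τ)
  have root_nonneg : 0 ≤ ω := div_nonneg (by linarith) (by positivity)
  have root_eq : τ * ω ^ 2 + ω = k ^ 2 :=
    sub_eq_zero.mp (by exact_mod_cast (roots ω).mpr (.inl rfl))
  simpa only [← pow_mul] using abs_sub_le_mul_sq_of_mul_sq_add_eq hτ.le root_nonneg root_eq
end
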